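/- arXiv:2103.10627 — 3 statements merged into one kernel-verified Lean document; each statement's English description precedes it below -/
import Mathlib

section
/- Let C be a smooth closed convex curve in the plane ℝ² with length L, enclosed area A, and curvature κ > 0 (with arclength element ds). Then L² − 4πA ≤ (2π/3) ( ∫_C (1/κ) ds − L²/(2π) ). -/
open MeasureTheory Real
open scoped RealInnerProductSpace Pointwise

noncomputable section

/-!
Parametrize the curve by its tangent angle `t`, with support function `h` and radius of curvature
`ρ = h + h''`. Then `L = ∫ ρ = ∫ h`, `2A = ∫ h ρ` and `∫ κ⁻¹ ds = ∫ ρ²`, all over a period `2π`, and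
the claim becomes `4 (∫ h)² ≤ 2π ∫ (h''² - 5 h'² + 4 h²)`. On the `n`-th Fourier mode the integrand
on the right contributes `(n² - 1)(n² - 4) ≥ 0`, and the mode `n = 0` is the left-hand side.

For `t` to be a parameter modulo `2π`, a simple closed curve with positive curvature has to turn
exactly once. Suppose it turns `m` times. Minimizing `∫ h` over intervals `[t, t + 2π]` gives one
whose chord is tangent to the curve and points forward; sliding the chord parallel to itself up the
arc over that interval reverses its direction, which produces a double point. As the points of a
simple curve repeat only after a full period `2πm`, this forces `m = 1`.
-/

lemma continuous_of_hasDerivAt {E : Type*} [NormedAddCommGroup E] [NormedSpace ℝ E] {f f' : ℝ → E}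
    (hf : ∀ x, HasDerivAt f (f' x) x) : Continuous f :=
  continuous_iff_continuousAt.2 fun x => (hf x).continuousAt

section Wirtinger

lemma fourierCoeffOn_of_hasDerivAt_of_eq {a b : ℝ} (hab : a < b) {f f' : ℝ → ℂ}
    (hf : ∀ x ∈ Set.uIcc a b, HasDerivAt f (f' x) x) (hf' : IntervalIntegrable f' volume a b)
    (hfab : f a = f b) (n : ℤ) :
    fourierCoeffOn hab f' n = 2 * π * Complex.I * n / (b - a) * fourierCoeffOn hab f n := by
  rcases eq_or_ne n 0 with rfl | hn
  · rw [fourierCoeffOn_eq_integral]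
    simp [intervalIntegral.integral_eq_sub_of_hasDerivAt hf hf', hfab]
  · have hlen : (b - a : ℂ) ≠ 0 := by exact_mod_cast (sub_pos.2 hab).ne'
    have hπ : (π : ℂ) ≠ 0 := by exact_mod_cast pi_ne_zero
    have hn' : (n : ℂ) ≠ 0 := by exact_mod_cast hn
    rw [fourierCoeffOn_of_hasDerivAt hab hn hf hf', hfab, sub_self, mul_zero, zero_sub]
    field_simp [Complex.I_ne_zero]

lemma hasSum_sq_fourierCoeffOn_ofReal {a b : ℝ} (hab : a < b) {f : ℝ → ℝ}
    (hf : ContinuousOn f (Set.Icc a b)) :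
    HasSum (fun n : ℤ => ‖fourierCoeffOn hab (fun x => (f x : ℂ)) n‖ ^ 2)
      ((b - a)⁻¹ * ∫ x in a..b, f x ^ 2) := by
  have hfC : ContinuousOn (fun x => (f x : ℂ)) (Set.Icc a b) :=
    Complex.continuous_ofReal.comp_continuousOn hf
  have hL2 : MemLp (fun x => (f x : ℂ)) 2 (volume.restrict (Set.Ioc a b)) :=
    (memLp_two_iff_integrable_sq_norm
      ((hfC.mono Set.Ioc_subset_Icc_self).aestronglyMeasurable measurableSet_Ioc)).2
      ((hfC.norm.pow 2).integrableOn_Icc.mono_set Set.Ioc_subset_Icc_self)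
  simpa only [Complex.norm_real, Real.norm_eq_abs, sq_abs, smul_eq_mul] using
    hasSum_sq_fourierCoeffOn hab hL2

lemma int_mul_add_one_nonneg (m : ℤ) : 0 ≤ m * (m + 1) := by
  rcases le_or_gt 0 m with hm | hm
  · positivity
  · exact mul_nonneg_of_nonpos_of_nonpos hm.le hm

lemma sq_sub_sq_mul_sq_sub_succ_sq_nonneg (k n : ℤ) :
    0 ≤ (n ^ 2 - k ^ 2) * (n ^ 2 - (k + 1) ^ 2) := by
  have := mul_nonneg (int_mul_add_one_nonneg (n - k - 1)) (int_mul_add_one_nonneg (n + k))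
  linarith

variable {a : ℝ} {h h' h'' : ℝ → ℝ}

lemma norm_sq_fourierCoeffOn_deriv (hab : a < a + 2 * π) (hh : ∀ x, HasDerivAt h (h' x) x)
    (hh' : Continuous h') (hper : h a = h (a + 2 * π)) (n : ℤ) :
    ‖fourierCoeffOn hab (fun x => (h' x : ℂ)) n‖ ^ 2 =
      n ^ 2 * ‖fourierCoeffOn hab (fun x => (h x : ℂ)) n‖ ^ 2 := by
  have hcont : Continuous fun x => (h' x : ℂ) := by fun_prop
  have hfreq : 2 * π * Complex.I * n / (((a + 2 * π : ℝ) : ℂ) - a) = Complex.I * n := by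
    have hπ : (π : ℂ) ≠ 0 := by exact_mod_cast pi_ne_zero
    push_cast
    rw [add_sub_cancel_left]
    field_simp
  rw [fourierCoeffOn_of_hasDerivAt_of_eq hab (fun x _ => (hh x).ofReal_comp)
    (hcont.intervalIntegrable _ _) (congrArg _ hper), hfreq]
  simp [mul_pow]

theorem mul_sq_integral_le_of_hasDerivAt (k : ℤ) (hh : ∀ x, HasDerivAt h (h' x) x)
    (hh' : ∀ x, HasDerivAt h' (h'' x) x) (hh'' : Continuous h'') (hper : h a = h (a + 2 * π))
    (hper' : h' a = h' (a + 2 * π)) :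
    k ^ 2 * (k + 1) ^ 2 * (∫ x in a..a + 2 * π, h x) ^ 2 ≤
      2 * π * ((∫ x in a..a + 2 * π, h'' x ^ 2)
        - (k ^ 2 + (k + 1) ^ 2) * (∫ x in a..a + 2 * π, h' x ^ 2)
        + k ^ 2 * (k + 1) ^ 2 * ∫ x in a..a + 2 * π, h x ^ 2) := by
  have hab : a < a + 2 * π := by linarith [pi_pos]
  have hc : Continuous h := continuous_of_hasDerivAt hh
  have hc' : Continuous h' := continuous_of_hasDerivAt hh'
  have hsum := hasSum_sq_fourierCoeffOn_ofReal hab hc.continuousOn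
  have hsum' := hasSum_sq_fourierCoeffOn_ofReal hab hc'.continuousOn
  have hsum'' := hasSum_sq_fourierCoeffOn_ofReal hab hh''.continuousOn
  simp only [norm_sq_fourierCoeffOn_deriv hab hh' hh'' hper',
    norm_sq_fourierCoeffOn_deriv hab hh hc' hper] at hsum' hsum''
  have hcomb := (hsum''.sub (hsum'.mul_left ((k : ℝ) ^ 2 + (k + 1) ^ 2))).add
    (hsum.mul_left ((k : ℝ) ^ 2 * (k + 1) ^ 2))
  have hzero := le_hasSum hcomb 0 fun n _ => by
    have hfactor : (0 : ℝ) ≤ (n ^ 2 - k ^ 2) * (n ^ 2 - (k + 1) ^ 2) := by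
      exact_mod_cast sq_sub_sq_mul_sq_sub_succ_sq_nonneg k n
    have := mul_nonneg hfactor (sq_nonneg ‖fourierCoeffOn hab (fun x => (h x : ℂ)) n‖)
    linarith
  have hmean : ‖fourierCoeffOn hab (fun x => (h x : ℂ)) 0‖ ^ 2 =
      ((2 * π)⁻¹ * ∫ x in a..a + 2 * π, h x) ^ 2 := by
    rw [fourierCoeffOn_eq_integral]
    simp [intervalIntegral.integral_ofReal, mul_pow]
  rw [hmean] at hzero
  simp only [add_sub_cancel_left, Int.cast_zero] at hzero
  have := mul_le_mul_of_nonneg_left hzero (sq_nonneg (2 * π))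
  field_simp at this
  linarith

end Wirtinger

section AngleParametrization

/-- The plane curve `Z` is parametrized by the angle `t` that its tangent makes with the real axis;
`ρ t` is then the signed radius of curvature at `Z t`. -/
def IsAngleParametrized (Z : ℝ → ℂ) (ρ : ℝ → ℝ) : Prop :=
  ∀ t, HasDerivAt Z (ρ t * Complex.exp (t * Complex.I)) t

/-- Minkowski's support function `⟨Z t, ν t⟩` of a curve parametrized by its tangent angle, where
`ν t = -i e^{it}` is the outward normal of a curve run through counterclockwise. -/
def supportFunction (Z : ℝ → ℂ) (t : ℝ) : ℝ := -(Z t * Complex.exp (-(t * Complex.I))).im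

/-- The component `⟨Z t, e^{it}⟩` of the position vector along the tangent, for a curve
parametrized by its tangent angle. -/
def tangentialCoordinate (Z : ℝ → ℂ) (t : ℝ) : ℝ := (Z t * Complex.exp (-(t * Complex.I))).re

variable {Z : ℝ → ℂ} {ρ : ℝ → ℝ}

lemma exp_neg_add_int_mul_two_pi (t : ℝ) (m : ℤ) :
    Complex.exp (-(((t + m * (2 * π) : ℝ) : ℂ) * Complex.I)) =
      Complex.exp (-(t * Complex.I)) :=
  Complex.exp_eq_exp_iff_exists_int.2 ⟨-m, by push_cast; ring⟩

lemma supportFunction_periodic {m : ℤ} (hZ : Function.Periodic Z (m * (2 * π))) :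
    Function.Periodic (supportFunction Z) (m * (2 * π)) := fun t => by
  simp only [supportFunction, hZ t, exp_neg_add_int_mul_two_pi]

lemma tangentialCoordinate_periodic {m : ℤ} (hZ : Function.Periodic Z (m * (2 * π))) :
    Function.Periodic (tangentialCoordinate Z) (m * (2 * π)) := fun t => by
  simp only [tangentialCoordinate, hZ t, exp_neg_add_int_mul_two_pi]

lemma supportFunction_periodic_two_pi (hZ : Function.Periodic Z (2 * π)) :
    Function.Periodic (supportFunction Z) (2 * π) := by
  simpa using supportFunction_periodic (m := 1) (by simpa using hZ)

lemma tangentialCoordinate_periodic_two_pi (hZ : Function.Periodic Z (2 * π)) :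
    Function.Periodic (tangentialCoordinate Z) (2 * π) := by
  simpa using tangentialCoordinate_periodic (m := 1) (by simpa using hZ)

namespace IsAngleParametrized

lemma hasDerivAt_mul_exp_neg (hZ : IsAngleParametrized Z ρ) (t : ℝ) :
    HasDerivAt (fun t : ℝ => Z t * Complex.exp (-(t * Complex.I)))
      (ρ t - Complex.I * (Z t * Complex.exp (-(t * Complex.I)))) t := by
  have hexp : HasDerivAt (fun t : ℝ => Complex.exp (-(t * Complex.I)))
      (Complex.exp (-(t * Complex.I)) * -(1 * Complex.I)) t :=
    ((hasDerivAt_id t).ofReal_comp.mul_const Complex.I).neg.cexp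
  have hunit : Complex.exp (t * Complex.I) * Complex.exp (-(t * Complex.I)) = 1 := by
    rw [← Complex.exp_add, add_neg_cancel, Complex.exp_zero]
  refine ((hZ t).mul hexp).congr_deriv ?_
  linear_combination (ρ t : ℂ) * hunit

lemma hasDerivAt_supportFunction (hZ : IsAngleParametrized Z ρ) (t : ℝ) :
    HasDerivAt (supportFunction Z) (tangentialCoordinate Z t) t :=
  (Complex.imCLM.hasFDerivAt.comp_hasDerivAt t (hZ.hasDerivAt_mul_exp_neg t)).neg.congr_deriv
    (by simp [tangentialCoordinate])

lemma hasDerivAt_tangentialCoordinate (hZ : IsAngleParametrized Z ρ) (t : ℝ) :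
    HasDerivAt (tangentialCoordinate Z) (ρ t - supportFunction Z t) t :=
  (Complex.reCLM.hasFDerivAt.comp_hasDerivAt t (hZ.hasDerivAt_mul_exp_neg t)).congr_deriv
    (by simp [supportFunction])

lemma rotate (hZ : IsAngleParametrized Z ρ) (a : ℝ) :
    IsAngleParametrized (fun t => Z (a + t) * Complex.exp (-(a * Complex.I)))
      (fun t => ρ (a + t)) := fun t => by
  refine (((hZ (a + t)).comp_const_add a t).mul_const _).congr_deriv ?_
  rw [mul_assoc, ← Complex.exp_add]
  congr 2
  push_cast
  ring

lemma hasDerivAt_re (hZ : IsAngleParametrized Z ρ) (t : ℝ) :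
    HasDerivAt (fun t => (Z t).re) (ρ t * cos t) t :=
  (Complex.reCLM.hasFDerivAt.comp_hasDerivAt t (hZ t)).congr_deriv (by
    simp [Complex.exp_ofReal_mul_I_re])

lemma hasDerivAt_im (hZ : IsAngleParametrized Z ρ) (t : ℝ) :
    HasDerivAt (fun t => (Z t).im) (ρ t * sin t) t :=
  (Complex.imCLM.hasFDerivAt.comp_hasDerivAt t (hZ t)).congr_deriv (by
    simp [Complex.exp_ofReal_mul_I_im])

lemma strictMonoOn_im (hZ : IsAngleParametrized Z ρ) (hρ : ∀ t, 0 < ρ t) :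
    StrictMonoOn (fun t => (Z t).im) (Set.Icc 0 π) := by
  refine strictMonoOn_of_hasDerivWithinAt_pos (convex_Icc _ _)
    (continuous_of_hasDerivAt hZ.hasDerivAt_im).continuousOn
    (fun t _ => (hZ.hasDerivAt_im t).hasDerivWithinAt) fun t ht => ?_
  rw [interior_Icc] at ht
  exact mul_pos (hρ t) (sin_pos_of_mem_Ioo ht)

lemma strictAntiOn_im (hZ : IsAngleParametrized Z ρ) (hρ : ∀ t, 0 < ρ t) :
    StrictAntiOn (fun t => (Z t).im) (Set.Icc π (2 * π)) := by
  refine strictAntiOn_of_hasDerivWithinAt_neg (convex_Icc _ _)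
    (continuous_of_hasDerivAt hZ.hasDerivAt_im).continuousOn
    (fun t _ => (hZ.hasDerivAt_im t).hasDerivWithinAt) fun t ht => ?_
  rw [interior_Icc] at ht
  have hsin : 0 < sin (t - π) :=
    sin_pos_of_pos_of_lt_pi (by linarith [ht.1]) (by linarith [ht.2])
  rw [sin_sub_pi] at hsin
  exact mul_neg_of_pos_of_neg (hρ t) (by linarith)

lemma strictAntiOn_re (hZ : IsAngleParametrized Z ρ) (hρ : ∀ t, 0 < ρ t) :
    StrictAntiOn (fun t => (Z t).re) (Set.Icc (π / 2) (3 * π / 2)) := by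
  refine strictAntiOn_of_hasDerivWithinAt_neg (convex_Icc _ _)
    (continuous_of_hasDerivAt hZ.hasDerivAt_re).continuousOn
    (fun t _ => (hZ.hasDerivAt_re t).hasDerivWithinAt) fun t ht => ?_
  rw [interior_Icc] at ht
  exact mul_neg_of_pos_of_neg (hρ t)
    (cos_neg_of_pi_div_two_lt_of_lt ht.1 (by linarith [ht.2]))

end IsAngleParametrized

open Set in
lemma continuousOn_invFunOn_image {α β : Type*} [Nonempty α] [TopologicalSpace α]
    [TopologicalSpace β] [T2Space β] {f : α → β} {s : Set α} (hs : IsCompact s)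
    (hf : ContinuousOn f s) (hinj : InjOn f s) : ContinuousOn (Function.invFunOn f s) (f '' s) := by
  rw [continuousOn_iff_isClosed]
  intro t ht
  refine ⟨f '' (s ∩ t), ((hs.inter_right ht).image_of_continuousOn
    (hf.mono inter_subset_left)).isClosed, ?_⟩
  ext y
  constructor
  · rintro ⟨hyt, x, hx, rfl⟩
    rw [mem_preimage, hinj.leftInvOn_invFunOn hx] at hyt
    exact ⟨⟨x, ⟨hx, hyt⟩, rfl⟩, x, hx, rfl⟩
  · rintro ⟨⟨x, ⟨hx, hxt⟩, rfl⟩, -⟩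
    refine ⟨?_, x, hx, rfl⟩
    rwa [mem_preimage, hinj.leftInvOn_invFunOn hx]

open Set in
lemma exists_eq_of_rising_falling_arcs {x y : ℝ → ℝ} {a b c u₀ v₀ : ℝ} (hx : Continuous x)
    (hy : Continuous y) (hmono : StrictMonoOn y (Icc a b)) (hanti : StrictAntiOn y (Icc b c))
    (hu₀ : u₀ ∈ Icc a b) (hv₀ : v₀ ∈ Icc b c) (hbottom : y a = y c) (hxbottom : x a ≤ x c)
    (htop : y u₀ = y v₀) (hxtop : x v₀ ≤ x u₀) :
    ∃ u ∈ Icc a u₀, ∃ v ∈ Icc b c, x u = x v ∧ y u = y v := by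
  have hab : a ≤ b := hu₀.1.trans hu₀.2
  have hbc : b ≤ c := hv₀.1.trans hv₀.2
  have hau₀ : y a ≤ y u₀ := hmono.monotoneOn (left_mem_Icc.2 hab) hu₀ hu₀.1
  have hu₀b : y u₀ ≤ y b := hmono.monotoneOn hu₀ (right_mem_Icc.2 hab) hu₀.2
  have hrise : Icc (y a) (y u₀) ⊆ y '' Icc a b :=
    (Icc_subset_Icc_right hu₀b).trans (intermediate_value_Icc hab hy.continuousOn)
  have hfall : Icc (y a) (y u₀) ⊆ y '' Icc b c :=
    (Icc_subset_Icc hbottom.ge hu₀b).trans (intermediate_value_Icc' hbc hy.continuousOn)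
  set U := Function.invFunOn y (Icc a b)
  set V := Function.invFunOn y (Icc b c)
  have hU_left : LeftInvOn U y (Icc a b) := hmono.injOn.leftInvOn_invFunOn
  have hV_left : LeftInvOn V y (Icc b c) := hanti.injOn.leftInvOn_invFunOn
  have hgap : ContinuousOn (fun l => x (V l) - x (U l)) (Icc (y a) (y u₀)) :=
    (hx.comp_continuousOn ((continuousOn_invFunOn_image isCompact_Icc hy.continuousOn
      hanti.injOn).mono hfall)).sub
    (hx.comp_continuousOn ((continuousOn_invFunOn_image isCompact_Icc hy.continuousOn
      hmono.injOn).mono hrise))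
  have hgap_bottom : 0 ≤ x (V (y a)) - x (U (y a)) := by
    rw [hU_left (left_mem_Icc.2 hab), hbottom, hV_left (right_mem_Icc.2 hbc)]
    exact sub_nonneg.2 hxbottom
  have hgap_top : x (V (y u₀)) - x (U (y u₀)) ≤ 0 := by
    rw [hU_left hu₀, htop, hV_left hv₀]
    exact sub_nonpos.2 hxtop
  obtain ⟨l, hl, hgap_l⟩ := intermediate_value_Icc' hau₀ hgap ⟨hgap_top, hgap_bottom⟩
  have hyU : y (U l) = l := Function.invFunOn_eq (hrise hl)
  have hyV : y (V l) = l := Function.invFunOn_eq (hfall hl)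
  have hU : U l ∈ Icc a b := Function.invFunOn_mem (hrise hl)
  have hUle : U l ≤ u₀ := (hmono.le_iff_le hU hu₀).1 (hyU.trans_le hl.2)
  exact ⟨U l, ⟨hU.1, hUle⟩, V l, Function.invFunOn_mem (hfall hl),
    (sub_eq_zero.1 hgap_l).symm, hyU.trans hyV.symm⟩

namespace IsAngleParametrized

lemma exists_horizontal_chord_near_pi (hZ : IsAngleParametrized Z ρ) (hρ : ∀ t, 0 < ρ t) :
    ∃ u ∈ Set.Ico (π / 2) π, ∃ v ∈ Set.Icc π (3 * π / 2),
      (Z u).im = (Z v).im ∧ (Z v).re ≤ (Z u).re := by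
  have hπ := pi_pos
  have hcont : Continuous fun t => (Z t).im := continuous_of_hasDerivAt hZ.hasDerivAt_im
  have hleft : (Z (π / 2)).im < (Z π).im :=
    hZ.strictMonoOn_im hρ ⟨by linarith, by linarith⟩ ⟨hπ.le, le_rfl⟩ (by linarith)
  have hright : (Z (3 * π / 2)).im < (Z π).im :=
    hZ.strictAntiOn_im hρ ⟨le_rfl, by linarith⟩ ⟨by linarith, by linarith⟩ (by linarith)
  set l := max (Z (π / 2)).im (Z (3 * π / 2)).im
  have hl : l < (Z π).im := max_lt hleft hright
  obtain ⟨u, hu, hul⟩ := intermediate_value_Icc (by linarith : π / 2 ≤ π) hcont.continuousOn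
    ⟨le_max_left _ _, hl.le⟩
  obtain ⟨v, hv, hvl⟩ := intermediate_value_Icc' (by linarith : π ≤ 3 * π / 2)
    hcont.continuousOn ⟨le_max_right _ _, hl.le⟩
  have huπ : u ≠ π := by
    rintro rfl
    exact hl.ne' hul
  exact ⟨u, ⟨hu.1, hu.2.lt_of_ne huπ⟩, v, hv, hul.trans hvl.symm,
    (hZ.strictAntiOn_re hρ).antitoneOn ⟨hu.1, by linarith [hu.2]⟩ ⟨by linarith [hv.1], hv.2⟩
      (hu.2.trans hv.1)⟩

-- Sliding a horizontal chord between the rising arc on `[0, π]` and the falling arc on `[π, 2π]`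
-- reverses its direction, so that it must degenerate to a point in between.
lemma exists_double_point_of_horizontal_chord (hZ : IsAngleParametrized Z ρ)
    (hρ : ∀ t, 0 < ρ t) (him : (Z 0).im = (Z (2 * π)).im) (hre : (Z 0).re ≤ (Z (2 * π)).re) :
    ∃ u v, 0 ≤ u ∧ u < v ∧ v ≤ 2 * π ∧ Z u = Z v := by
  obtain ⟨u₀, hu₀, v₀, hv₀, htop, hxtop⟩ := hZ.exists_horizontal_chord_near_pi hρ
  obtain ⟨u, hu, v, hv, hx, hy⟩ := exists_eq_of_rising_falling_arcs
    (continuous_of_hasDerivAt hZ.hasDerivAt_re) (continuous_of_hasDerivAt hZ.hasDerivAt_im)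
    (hZ.strictMonoOn_im hρ) (hZ.strictAntiOn_im hρ)
    ⟨by linarith [hu₀.1, pi_pos], hu₀.2.le⟩ ⟨hv₀.1, by linarith [hv₀.2, pi_pos]⟩
    him hre htop hxtop
  exact ⟨u, v, hu.1, hu.2.trans_lt (hu₀.2.trans_le hv.1), hv.2, Complex.ext hx hy⟩

end IsAngleParametrized

lemma deriv_deriv_nonneg_of_isLocalMin {f : ℝ → ℝ} {a : ℝ} (hmin : IsLocalMin f a)
    (hf : ContinuousAt f a) : 0 ≤ deriv (deriv f) a := by
  by_contra! hneg
  have hmax : IsLocalMax f a := isLocalMax_of_deriv_deriv_neg hneg hmin.deriv_eq_zero hf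
  have hconst : f =ᶠ[nhds a] fun _ => f a := by
    filter_upwards [hmin, hmax] with x h₁ h₂ using le_antisymm h₂ h₁
  have hzero := hconst.deriv.deriv_eq
  simp only [deriv_const'] at hzero
  exact hneg.ne hzero

lemma exists_deriv_eq_zero_and_second_deriv_nonneg_of_periodic {q q' q'' : ℝ → ℝ} {c : ℝ}
    (hper : Function.Periodic q c) (hc : c ≠ 0) (hq : ∀ t, HasDerivAt q (q' t) t)
    (hq' : ∀ t, HasDerivAt q' (q'' t) t) : ∃ a, q' a = 0 ∧ 0 ≤ q'' a := by
  have hcont : Continuous q := continuous_of_hasDerivAt hq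
  obtain ⟨_, ⟨a, rfl⟩, ha⟩ :=
    (hper.compact_of_continuous hc hcont).exists_isLeast (Set.range_nonempty q)
  have hmin : IsLocalMin q a := Filter.Eventually.of_forall fun t => ha ⟨t, rfl⟩
  have hnonneg := deriv_deriv_nonneg_of_isLocalMin hmin hcont.continuousAt
  rw [deriv_eq hq, (hq' a).deriv] at hnonneg
  exact ⟨a, hmin.hasDerivAt_eq_zero (hq a), hnonneg⟩

namespace IsAngleParametrized

lemma exists_tangential_chord (hZ : IsAngleParametrized Z ρ) {m : ℤ} (hm : m ≠ 0)
    (hper : Function.Periodic Z (m * (2 * π))) :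
    ∃ a, supportFunction Z (a + 2 * π) = supportFunction Z a ∧
      tangentialCoordinate Z a ≤ tangentialCoordinate Z (a + 2 * π) := by
  set h := supportFunction Z
  have hh : Continuous h := continuous_of_hasDerivAt hZ.hasDerivAt_supportFunction
  have hint : ∀ a b, IntervalIntegrable h volume a b := fun a b => hh.intervalIntegrable a b
  -- At a minimum of `q`, the condition `q' = 0` makes the chord from `a` to `a + 2π` tangential and
  -- `0 ≤ q''` makes it point forward.
  set q : ℝ → ℝ := fun t => ∫ s in t..t + 2 * π, h s with hq_def
  have hq : ∀ t, HasDerivAt q (h (t + 2 * π) - h t) t := fun t => by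
    have hsplit : q = fun t => (∫ s in 0..t + 2 * π, h s) - ∫ s in 0..t, h s :=
      funext fun t => (intervalIntegral.integral_interval_sub_left (hint _ _) (hint _ _)).symm
    rw [hsplit]
    exact ((hh.integral_hasStrictDerivAt 0 (t + 2 * π)).hasDerivAt.comp_add_const t (2 * π)).sub
      (hh.integral_hasStrictDerivAt 0 t).hasDerivAt
  have hqper : Function.Periodic q (m * (2 * π)) := fun t => by
    simp only [hq_def, add_right_comm t _ (2 * π)]
    rw [← intervalIntegral.integral_comp_add_right h]
    simp only [supportFunction_periodic hper _, h]
  obtain ⟨a, hzero, hnonneg⟩ := exists_deriv_eq_zero_and_second_deriv_nonneg_of_periodic hqper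
    (mul_ne_zero (Int.cast_ne_zero.2 hm) two_pi_pos.ne') hq fun t =>
      ((hZ.hasDerivAt_supportFunction _).comp_add_const t (2 * π)).sub
        (hZ.hasDerivAt_supportFunction t)
  exact ⟨a, sub_eq_zero.1 hzero, sub_nonneg.1 hnonneg⟩

theorem exists_double_point (hZ : IsAngleParametrized Z ρ) (hρ : ∀ t, 0 < ρ t) {m : ℤ}
    (hm : m ≠ 0) (hper : Function.Periodic Z (m * (2 * π))) :
    ∃ u v, u < v ∧ v ≤ u + 2 * π ∧ Z u = Z v := by
  obtain ⟨a, him, hre⟩ := hZ.exists_tangential_chord hm hper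
  have hexp : Complex.exp (-(((a + 2 * π : ℝ) : ℂ) * Complex.I)) =
      Complex.exp (-(a * Complex.I)) := by
    simpa using exp_neg_add_int_mul_two_pi a 1
  simp only [supportFunction, tangentialCoordinate, hexp, neg_inj] at him hre
  obtain ⟨u, v, hu, huv, hv, hZuv⟩ :=
    (hZ.rotate a).exists_double_point_of_horizontal_chord (fun t => hρ (a + t))
      (by simpa using him.symm) (by simpa using hre)
  exact ⟨a + u, a + v, by linarith, by linarith,
    mul_right_cancel₀ (Complex.exp_ne_zero _) hZuv⟩

end IsAngleParametrized

end AngleParametrization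

section FrenetCurve

lemma periodic_of_hasDerivAt {E : Type*} [NormedAddCommGroup E] [NormedSpace ℝ E] {f f' : ℝ → E}
    {c : ℝ} (hf : ∀ x, HasDerivAt f (f' x) x) (hper : Function.Periodic f c) :
    Function.Periodic f' c := fun x => by
  have hshift := (hf (x + c)).comp_add_const x c
  rw [funext hper] at hshift
  exact hshift.unique (hf x)

lemma injOn_Ico_add_of_periodic {α : Type*} {f : ℝ → α} {L : ℝ} (hL : 0 < L)
    (hper : Function.Periodic f L) (hinj : Set.InjOn f (Set.Ico 0 L)) (a : ℝ) :
    Set.InjOn f (Set.Ico a (a + L)) := fun x hx y hy hxy => by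
  have hmod : ∀ x, f (toIcoMod hL 0 x) = f x := fun x => hper.sub_zsmul_eq _
  have hmem : ∀ x, toIcoMod hL 0 x ∈ Set.Ico 0 L := fun x => by
    simpa only [zero_add] using toIcoMod_mem_Ico hL 0 x
  have hcongr := (toIcoMod_inj hL).1 (hinj (hmem x) (hmem y) (by rw [hmod, hmod, hxy]))
  rw [← (toIcoMod_eq_self hL).2 hx, ← (toIcoMod_eq_self hL).2 hy]
  exact (toIcoMod_inj hL).2 hcongr

lemma surjective_of_map_add_eq {θ : ℝ → ℝ} {L K : ℝ} (hθ : Continuous θ) (hK : 0 < K)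
    (hadd : ∀ s, θ (s + L) = θ s + K) : Function.Surjective θ := fun y => by
  have hint : ∀ n : ℤ, θ (n • L) = θ 0 + n * K := fun n => by
    simpa using AddConstMapClass.map_add_zsmul (⟨θ, hadd⟩ : AddConstMap ℝ ℝ L K) 0 n
  obtain ⟨n, hn⟩ := exists_int_gt ((y - θ 0) / K)
  obtain ⟨m, hm⟩ := exists_int_lt ((y - θ 0) / K)
  rw [div_lt_iff₀ hK] at hn
  rw [lt_div_iff₀ hK] at hm
  exact mem_range_of_exists_le_of_exists_ge hθ ⟨m • L, by rw [hint]; linarith⟩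
    ⟨n • L, by rw [hint]; linarith⟩

lemma exists_hasDerivAt_inverse {θ κ : ℝ → ℝ} (hθ : ∀ s, HasDerivAt θ (κ s) s)
    (hκ : ∀ s, 0 < κ s) (hsurj : Function.Surjective θ) :
    ∃ σ : ℝ → ℝ, Function.RightInverse σ θ ∧ ∀ t, HasDerivAt σ (κ (σ t))⁻¹ t := by
  let e := (strictMono_of_hasDerivAt_pos hθ hκ).orderIsoOfSurjective θ hsurj
  exact ⟨e.symm, e.apply_symm_apply, fun t =>
    HasDerivAt.of_local_left_inverse e.symm.continuous.continuousAt (hθ _) (hκ _).ne'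
      (Filter.Eventually.of_forall e.apply_symm_apply)⟩

/-- A unit-speed plane curve in `ℂ ≅ ℝ²` with tangent `T` and signed curvature `κ`: the Frenet
equations `Γ' = T`, `T' = κ i T`, where `i T` is the normal to the left of `T`. -/
structure IsFrenetCurve (Γ T : ℝ → ℂ) (κ : ℝ → ℝ) : Prop where
  hasDerivAt : ∀ s, HasDerivAt Γ (T s) s
  norm_tangent : ∀ s, ‖T s‖ = 1
  hasDerivAt_tangent : ∀ s, HasDerivAt T (κ s * Complex.I * T s) s

namespace IsFrenetCurve

variable {Γ T : ℝ → ℂ} {κ : ℝ → ℝ} {L : ℝ}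

lemma tangent_periodic (hΓ : IsFrenetCurve Γ T κ) (hper : Function.Periodic Γ L) :
    Function.Periodic T L :=
  periodic_of_hasDerivAt hΓ.hasDerivAt hper

lemma curvature_periodic (hΓ : IsFrenetCurve Γ T κ) (hper : Function.Periodic Γ L) :
    Function.Periodic κ L := fun s => by
  have hT : T s ≠ 0 := norm_ne_zero_iff.1 (by simp [hΓ.norm_tangent])
  have hTper := hΓ.tangent_periodic hper
  have hderiv := periodic_of_hasDerivAt hΓ.hasDerivAt_tangent hTper s
  simpa [hTper s, hT] using hderiv

lemma exists_tangent_angle (hΓ : IsFrenetCurve Γ T κ) (hκ : Continuous κ) :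
    ∃ θ : ℝ → ℝ, (∀ s, HasDerivAt θ (κ s) s) ∧
      ∀ s, T s = Complex.exp (θ s * Complex.I) := by
  let θ : ℝ → ℝ := fun s => (T 0).arg + ∫ t in 0..s, κ t
  have hθ : ∀ s, HasDerivAt θ (κ s) s := fun s =>
    (hκ.integral_hasStrictDerivAt 0 s).hasDerivAt.const_add _
  have hquot : ∀ s, HasDerivAt (fun s => T s * Complex.exp (-(θ s * Complex.I))) 0 s := fun s =>
    ((hΓ.hasDerivAt_tangent s).mul ((hθ s).ofReal_comp.mul_const Complex.I).neg.cexp).congr_deriv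
      (by ring)
  have hinit : T 0 * Complex.exp (-(θ 0 * Complex.I)) = 1 := by
    have hpolar := Complex.norm_mul_exp_arg_mul_I (T 0)
    rw [hΓ.norm_tangent, Complex.ofReal_one, one_mul] at hpolar
    simp only [θ, intervalIntegral.integral_same, add_zero]
    nth_rw 1 [← hpolar]
    rw [← Complex.exp_add, add_neg_cancel, Complex.exp_zero]
  refine ⟨θ, hθ, fun s => ?_⟩
  have hconst := is_const_of_deriv_eq_zero (fun s => (hquot s).differentiableAt)
    (fun s => (hquot s).deriv) s 0
  rwa [hinit, Complex.exp_neg, mul_inv_eq_one₀ (Complex.exp_ne_zero _)] at hconst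

lemma exists_rotation_index (hΓ : IsFrenetCurve Γ T κ) (hper : Function.Periodic Γ L)
    {θ : ℝ → ℝ} (hθ : ∀ s, HasDerivAt θ (κ s) s)
    (hT : ∀ s, T s = Complex.exp (θ s * Complex.I)) :
    ∃ m : ℤ, ∀ s, θ (s + L) = θ s + m * (2 * π) := by
  have hdiff : ∀ s, HasDerivAt (fun s => θ (s + L) - θ s) 0 s := fun s =>
    (((hθ (s + L)).comp_add_const s L).sub (hθ s)).congr_deriv
      (sub_eq_zero.2 (hΓ.curvature_periodic hper s))
  have hexp : Complex.exp (θ (0 + L) * Complex.I) = Complex.exp (θ 0 * Complex.I) := by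
    rw [← hT, ← hT, hΓ.tangent_periodic hper]
  obtain ⟨m, hm⟩ := Complex.exp_eq_exp_iff_exists_int.1 hexp
  have hincr : (θ (0 + L) : ℂ) = θ 0 + m * (2 * π) :=
    mul_right_cancel₀ Complex.I_ne_zero (by rw [hm]; ring)
  have hincr_real : θ (0 + L) = θ 0 + m * (2 * π) := by exact_mod_cast hincr
  refine ⟨m, fun s => ?_⟩
  have hconst := is_const_of_deriv_eq_zero (fun s => (hdiff s).differentiableAt)
    (fun s => (hdiff s).deriv) s 0
  linarith

lemma isAngleParametrized_comp (hΓ : IsFrenetCurve Γ T κ) {σ : ℝ → ℝ}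
    (hσ : ∀ t, HasDerivAt σ (κ (σ t))⁻¹ t)
    (hT : ∀ t, T (σ t) = Complex.exp (t * Complex.I)) :
    IsAngleParametrized (Γ ∘ σ) (fun t => (κ (σ t))⁻¹) := fun t => by
  have := (hΓ.hasDerivAt (σ t)).scomp t (hσ t)
  rwa [hT, Complex.real_smul] at this

lemma rotation_index_eq_one (hΓ : IsFrenetCurve Γ T κ) (hκ : ∀ s, 0 < κ s) (hL : 0 < L)
    (hper : Function.Periodic Γ L) (hinj : Set.InjOn Γ (Set.Ico 0 L)) {σ : ℝ → ℝ} {m : ℤ}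
    (hm : 0 < m) (hσ : ∀ t, HasDerivAt σ (κ (σ t))⁻¹ t)
    (hT : ∀ t, T (σ t) = Complex.exp (t * Complex.I))
    (hadd : ∀ t, σ (t + m * (2 * π)) = σ t + L) : m = 1 := by
  have hpos : ∀ t, 0 < (κ (σ t))⁻¹ := fun t => inv_pos.2 (hκ _)
  have hmono : StrictMono σ := strictMono_of_hasDerivAt_pos hσ hpos
  have hZper : Function.Periodic (Γ ∘ σ) (m * (2 * π)) := fun t => by
    simp only [Function.comp_apply, hadd, hper (σ t)]
  obtain ⟨u, v, huv, hvu, heq⟩ :=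
    (hΓ.isAngleParametrized_comp hσ hT).exists_double_point hpos hm.ne' hZper
  by_contra hne
  have htwo : (2 : ℝ) ≤ m := by exact_mod_cast (by omega : 2 ≤ m)
  have hlt : σ v < σ u + L := by
    rw [← hadd]
    exact hmono (by nlinarith [pi_pos])
  exact (hmono huv).ne (injOn_Ico_add_of_periodic hL hper hinj (σ u)
    ⟨le_rfl, by linarith⟩ ⟨(hmono huv).le, hlt⟩ heq)

theorem exists_tangent_angle_parameter (hΓ : IsFrenetCurve Γ T κ) (hκc : Continuous κ)
    (hκ : ∀ s, 0 < κ s) (hL : 0 < L) (hper : Function.Periodic Γ L)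
    (hinj : Set.InjOn Γ (Set.Ico 0 L)) :
    ∃ σ : ℝ → ℝ, (∀ t, HasDerivAt σ (κ (σ t))⁻¹ t) ∧ (∀ t, σ (t + 2 * π) = σ t + L) ∧
      ∀ t, T (σ t) = Complex.exp (t * Complex.I) := by
  obtain ⟨θ, hθ, hTθ⟩ := hΓ.exists_tangent_angle hκc
  obtain ⟨m, hθadd⟩ := hΓ.exists_rotation_index hper hθ hTθ
  have hmono : StrictMono θ := strictMono_of_hasDerivAt_pos hθ hκ
  have hincr : 0 < m * (2 * π) := by
    have := hmono (by linarith : (0 : ℝ) < 0 + L)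
    rw [hθadd] at this
    linarith
  have hm : 0 < m := by exact_mod_cast pos_of_mul_pos_left hincr two_pi_pos.le
  obtain ⟨σ, hθσ, hσ⟩ := exists_hasDerivAt_inverse hθ hκ
    (surjective_of_map_add_eq (continuous_of_hasDerivAt hθ) hincr hθadd)
  have hT : ∀ t, T (σ t) = Complex.exp (t * Complex.I) := fun t => by rw [hTθ, hθσ]
  have hσadd : ∀ t, σ (t + m * (2 * π)) = σ t + L := fun t =>
    hmono.injective (by rw [hθσ, hθadd, hθσ])
  have hone : m = 1 := hΓ.rotation_index_eq_one hκ hL hper hinj hm hσ hT hσadd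
  exact ⟨σ, hσ, by simpa [hone] using hσadd, hT⟩

end IsFrenetCurve

end FrenetCurve

section Deficit

namespace IsAngleParametrized

variable {Z : ℝ → ℂ} {ρ : ℝ → ℝ}

lemma integral_supportFunction (hZ : IsAngleParametrized Z ρ) (hρ : Continuous ρ)
    (hper : Function.Periodic Z (2 * π)) (a : ℝ) :
    ∫ t in a..a + 2 * π, supportFunction Z t = ∫ t in a..a + 2 * π, ρ t := by
  have hh : Continuous (supportFunction Z) := continuous_of_hasDerivAt hZ.hasDerivAt_supportFunction
  have hftc := intervalIntegral.integral_eq_sub_of_hasDerivAt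
    (fun t _ => hZ.hasDerivAt_tangentialCoordinate t)
    ((hρ.sub hh).intervalIntegrable a (a + 2 * π))
  rw [tangentialCoordinate_periodic_two_pi hper a, sub_self, intervalIntegral.integral_sub
    (hρ.intervalIntegrable _ _) (hh.intervalIntegrable _ _)] at hftc
  exact (sub_eq_zero.1 hftc).symm

lemma integral_tangentialCoordinate_sq (hZ : IsAngleParametrized Z ρ) (hρ : Continuous ρ)
    (hper : Function.Periodic Z (2 * π)) (a : ℝ) :
    ∫ t in a..a + 2 * π, tangentialCoordinate Z t ^ 2 =
      (∫ t in a..a + 2 * π, supportFunction Z t ^ 2) -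
        ∫ t in a..a + 2 * π, supportFunction Z t * ρ t := by
  have hh : Continuous (supportFunction Z) := continuous_of_hasDerivAt hZ.hasDerivAt_supportFunction
  have hh' : Continuous (tangentialCoordinate Z) :=
    continuous_of_hasDerivAt hZ.hasDerivAt_tangentialCoordinate
  have hparts := intervalIntegral.integral_mul_deriv_eq_deriv_mul
    (fun t _ => hZ.hasDerivAt_supportFunction t) (fun t _ => hZ.hasDerivAt_tangentialCoordinate t)
    (hh'.intervalIntegrable a (a + 2 * π)) ((hρ.sub hh).intervalIntegrable _ _)
  rw [supportFunction_periodic_two_pi hper a, tangentialCoordinate_periodic_two_pi hper a, sub_self,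
    zero_sub] at hparts
  simp only [mul_sub, ← pow_two] at hparts
  rw [intervalIntegral.integral_sub] at hparts
  · linarith
  all_goals exact Continuous.intervalIntegrable (by fun_prop) _ _

theorem four_mul_sq_integral_le (hZ : IsAngleParametrized Z ρ) (hρ : Continuous ρ)
    (hper : Function.Periodic Z (2 * π)) (a : ℝ) :
    4 * (∫ t in a..a + 2 * π, ρ t) ^ 2 ≤
      2 * π * ((∫ t in a..a + 2 * π, ρ t ^ 2) +
        3 * ∫ t in a..a + 2 * π, supportFunction Z t * ρ t) := by
  have hh : Continuous (supportFunction Z) := continuous_of_hasDerivAt hZ.hasDerivAt_supportFunction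
  have hsq : ∫ t in a..a + 2 * π, (ρ t - supportFunction Z t) ^ 2 =
      (∫ t in a..a + 2 * π, ρ t ^ 2) - 2 * (∫ t in a..a + 2 * π, supportFunction Z t * ρ t) +
        ∫ t in a..a + 2 * π, supportFunction Z t ^ 2 := by
    rw [← intervalIntegral.integral_const_mul, ← intervalIntegral.integral_sub,
      ← intervalIntegral.integral_add]
    · exact intervalIntegral.integral_congr fun t _ => by ring
    all_goals exact Continuous.intervalIntegrable (by fun_prop) _ _
  have hwirtinger := mul_sq_integral_le_of_hasDerivAt 1 hZ.hasDerivAt_supportFunction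
    hZ.hasDerivAt_tangentialCoordinate (hρ.sub hh) (supportFunction_periodic_two_pi hper a).symm
    (tangentialCoordinate_periodic_two_pi hper a).symm
  rw [hsq, hZ.integral_tangentialCoordinate_sq hρ hper,
    hZ.integral_supportFunction hρ hper] at hwirtinger
  push_cast at hwirtinger
  linarith

end IsAngleParametrized

lemma integral_eq_integral_comp_mul_of_periodic {F σ ρ : ℝ → ℝ} {L P : ℝ} (hF : Continuous F)
    (hFper : Function.Periodic F L) (hσ : ∀ t, HasDerivAt σ (ρ t) t) (hρ : Continuous ρ) {a : ℝ}
    (hadd : σ (a + P) = σ a + L) :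
    ∫ s in 0..L, F s = ∫ t in a..a + P, F (σ t) * ρ t := by
  have hsubst := intervalIntegral.integral_comp_mul_deriv (a := a) (b := a + P)
    (fun t _ => hσ t) hρ.continuousOn hF
  rw [hadd, hFper.intervalIntegral_add_eq (σ a) 0, zero_add] at hsubst
  exact hsubst.symm

namespace IsFrenetCurve

variable {Γ T : ℝ → ℂ} {κ : ℝ → ℝ} {L : ℝ}

theorem four_mul_sq_length_le (hΓ : IsFrenetCurve Γ T κ) (hκc : Continuous κ)
    (hκ : ∀ s, 0 < κ s) (hL : 0 < L) (hper : Function.Periodic Γ L)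
    (hinj : Set.InjOn Γ (Set.Ico 0 L)) :
    4 * L ^ 2 ≤ 2 * π * ((∫ s in 0..L, (κ s)⁻¹) +
      3 * ∫ s in 0..L, ((Γ s).re * (T s).im - (Γ s).im * (T s).re)) := by
  obtain ⟨σ, hσ, hσadd, hT⟩ := hΓ.exists_tangent_angle_parameter hκc hκ hL hper hinj
  set Z : ℝ → ℂ := Γ ∘ σ with hZ_def
  have hκinv : Continuous fun s => (κ s)⁻¹ := hκc.inv₀ fun s => (hκ s).ne'
  have hρ : Continuous fun t => (κ (σ t))⁻¹ := hκinv.comp (continuous_of_hasDerivAt hσ)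
  have hΓc : Continuous Γ := continuous_of_hasDerivAt hΓ.hasDerivAt
  have hTc : Continuous T := continuous_of_hasDerivAt hΓ.hasDerivAt_tangent
  have hZper : Function.Periodic Z (2 * π) := fun t => by
    simp only [hZ_def, Function.comp_apply, hσadd, hper (σ t)]
  have hκper := hΓ.curvature_periodic hper
  have hTper := hΓ.tangent_periodic hper
  have hsupport : ∀ t, (Γ (σ t)).re * (T (σ t)).im - (Γ (σ t)).im * (T (σ t)).re =
      supportFunction Z t := fun t => by
    rw [hT, supportFunction, ← neg_mul, ← Complex.ofReal_neg, Complex.mul_im,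
      Complex.exp_ofReal_mul_I_re, Complex.exp_ofReal_mul_I_im, Complex.exp_ofReal_mul_I_re,
      Complex.exp_ofReal_mul_I_im, cos_neg, sin_neg, hZ_def, Function.comp_apply]
    ring
  have hlength : L = ∫ t in 0..0 + 2 * π, (κ (σ t))⁻¹ := by
    simpa using integral_eq_integral_comp_mul_of_periodic (F := fun _ => 1) continuous_const
      (fun _ => rfl) hσ hρ (hσadd 0)
  have hradius : ∫ s in 0..L, (κ s)⁻¹ = ∫ t in 0..0 + 2 * π, (κ (σ t))⁻¹ ^ 2 := by
    simpa only [pow_two] using integral_eq_integral_comp_mul_of_periodic hκinv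
      (fun s => congrArg _ (hκper s)) hσ hρ (hσadd 0)
  have harea : ∫ s in 0..L, ((Γ s).re * (T s).im - (Γ s).im * (T s).re) =
      ∫ t in 0..0 + 2 * π, supportFunction Z t * (κ (σ t))⁻¹ := by
    simpa only [hsupport] using integral_eq_integral_comp_mul_of_periodic
      (F := fun s => (Γ s).re * (T s).im - (Γ s).im * (T s).re) (by fun_prop)
      (fun s => by simp only [hper s, hTper s]) hσ hρ (hσadd 0)
  rw [hradius, harea]
  nth_rw 1 [hlength]
  exact (hΓ.isAngleParametrized_comp hσ hT).four_mul_sq_integral_le hρ hZper 0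

end IsFrenetCurve

lemma inner_eq_zero_of_norm_eq_const {E : Type*} [NormedAddCommGroup E] [InnerProductSpace ℝ E]
    {f f' : ℝ → E} {c : ℝ} (hf : ∀ x, HasDerivAt f (f' x) x) (hnorm : ∀ x, ‖f x‖ = c) (x : ℝ) :
    inner ℝ (f x) (f' x) = 0 := by
  have hsq := (hf x).norm_sq
  simp only [hnorm] at hsq
  exact (mul_eq_zero.1 (hsq.unique (hasDerivAt_const x (c ^ 2)))).resolve_left two_ne_zero

lemma eq_det_mul_I_mul_of_norm_eq_one {z w : ℂ} (hz : ‖z‖ = 1) (horth : inner ℝ z w = 0) :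
    w = ((z.re * w.im - z.im * w.re : ℝ) : ℂ) * Complex.I * z := by
  have hunit : z.re ^ 2 + z.im ^ 2 = 1 := by
    rw [← Complex.sq_norm_sub_sq_re z, hz]; ring
  have hdot : z.re * w.re + z.im * w.im = 0 := by
    simpa [Complex.inner, mul_comm] using horth
  apply Complex.ext <;>
    simp only [Complex.mul_re, Complex.mul_im, Complex.ofReal_re, Complex.ofReal_im, Complex.I_re,
      Complex.I_im]
  · linear_combination (-w.re) * hunit + z.re * hdot
  · linear_combination (-w.im) * hunit + z.im * hdot

lemma isFrenetCurve_of_contDiff {γ : ℝ → ℝ × ℝ} (hγ : ContDiff ℝ 2 γ)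
    (hunit : ∀ s, (deriv γ s).1 ^ 2 + (deriv γ s).2 ^ 2 = 1) :
    IsFrenetCurve (fun s => ⟨(γ s).1, (γ s).2⟩) (fun s => ⟨(deriv γ s).1, (deriv γ s).2⟩)
      (fun s => (deriv γ s).1 * (deriv (deriv γ) s).2 -
        (deriv γ s).2 * (deriv (deriv γ) s).1) := by
  let e := Complex.equivRealProdCLM.symm
  have hderiv : ∀ {f : ℝ → ℝ × ℝ}, Differentiable ℝ f → ∀ s,
      HasDerivAt (fun s => e (f s)) (e (deriv f s)) s := fun hf s =>
    e.hasFDerivAt.comp_hasDerivAt s (hf s).hasDerivAt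
  have hT := hderiv ((ContDiff.deriv' (n := 1) hγ).differentiable one_ne_zero)
  have hnorm : ∀ s, ‖e (deriv γ s)‖ = 1 := fun s => by
    rw [Complex.norm_eq_sqrt_sq_add_sq, Real.sqrt_eq_one]
    exact hunit s
  exact ⟨hderiv (hγ.differentiable two_ne_zero), hnorm, fun s => (hT s).congr_deriv
    (eq_det_mul_I_mul_of_norm_eq_one (hnorm s) (inner_eq_zero_of_norm_eq_const hT hnorm s))⟩

end Deficit

theorem isoperimetric_deficit_upper_bound_general (L A : ℝ) (hL : 0 < L)
    (γ : ℝ → ℝ × ℝ) (hγ : ContDiff ℝ 2 γ)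
    (hper : Function.Periodic γ L)
    (hsimple : Set.InjOn γ (Set.Ico 0 L))
    (hunit : ∀ s : ℝ, ((deriv γ s).1) ^ 2 + ((deriv γ s).2) ^ 2 = 1)
    (hconvex : ∀ s : ℝ,
      0 < (deriv γ s).1 * (deriv (deriv γ) s).2 - (deriv γ s).2 * (deriv (deriv γ) s).1)
    (hA : A = (1 / 2) *
      ∫ s in (0 : ℝ)..L, ((γ s).1 * (deriv γ s).2 - (γ s).2 * (deriv γ s).1)) :
    L ^ 2 - 4 * π * A ≤
      (2 * π / 3) *
        ((∫ s in (0 : ℝ)..L,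
            ((deriv γ s).1 * (deriv (deriv γ) s).2 -
              (deriv γ s).2 * (deriv (deriv γ) s).1)⁻¹) - L ^ 2 / (2 * π)) := by
  have hγ' : ContDiff ℝ 1 (deriv γ) := ContDiff.deriv' (n := 1) hγ
  have hγ'c : Continuous (deriv γ) := hγ'.continuous
  have hγ''c : Continuous (deriv (deriv γ)) := hγ'.continuous_deriv le_rfl
  have hinj : Set.InjOn (fun s => (⟨(γ s).1, (γ s).2⟩ : ℂ)) (Set.Ico 0 L) :=
    Complex.equivRealProd.symm.injective.comp_injOn hsimple
  have hbound := (isFrenetCurve_of_contDiff hγ hunit).four_mul_sq_length_le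
    ((hγ'c.fst.mul hγ''c.snd).sub (hγ'c.snd.mul hγ''c.fst)) hconvex hL
    (fun s => by simp only [hper s]) hinj
  have hcancel : 2 * π / 3 * (L ^ 2 / (2 * π)) = L ^ 2 / 3 := by field_simp
  rw [hA, mul_sub, hcancel]
  linarith

/-- Lin–Tsai type inequality. Let `C` be a smooth closed convex curve in
`ℝ²`, parametrized by arclength by `γ` with period `L` (its length), simple, with
positive curvature `κ = det(γ', γ'')`, and enclosed (signed) area
`A = (1/2)∮ (γ₁ γ₂' − γ₂ γ₁')`.  Then
`L² − 4πA ≤ (2π/3) (∫_C κ⁻¹ ds − L²/(2π))`. -/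
theorem isoperimetric_deficit_upper_bound (L A : ℝ) (hL : 0 < L)
    (γ : ℝ → ℝ × ℝ) (hγ : ContDiff ℝ (⊤ : ℕ∞) γ)
    (hper : Function.Periodic γ L)
    (hsimple : Set.InjOn γ (Set.Ico 0 L))
    (hunit : ∀ s : ℝ, ((deriv γ s).1) ^ 2 + ((deriv γ s).2) ^ 2 = 1)
    (hconvex : ∀ s : ℝ,
      0 < (deriv γ s).1 * (deriv (deriv γ) s).2 - (deriv γ s).2 * (deriv (deriv γ) s).1)
    (hA : A = (1 / 2) *
      ∫ s in (0 : ℝ)..L, ((γ s).1 * (deriv γ s).2 - (γ s).2 * (deriv γ s).1)) :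
    L ^ 2 - 4 * π * A ≤
      (2 * π / 3) *
        ((∫ s in (0 : ℝ)..L,
            ((deriv γ s).1 * (deriv (deriv γ) s).2 -
              (deriv γ s).2 * (deriv (deriv γ) s).1)⁻¹) - L ^ 2 / (2 * π)) :=
  isoperimetric_deficit_upper_bound_general L A hL γ (contDiff_infty.1 hγ 2) hper
    hsimple hunit hconvex hA
end
end

section
/- Let C be a smooth closed convex curve in the plane ℝ² with length L, enclosed area A, and curvature κ > 0 (with arclength element ds). Then (2/π)(L² − 4πA) ≤ ∫_C (1/κ) ds − 2A. -/
open MeasureTheory Real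
open scoped RealInnerProductSpace Pointwise

noncomputable section

/-!
For a convex curve `ζ` parametrised by its tangent angle `θ`, the support function
`h = Im (conj ζ * exp (θ * I))` satisfies `h + h'' = ρ` with `ρ = 1 / κ`, and
`L = ∫ ρ dθ = ∫ h dθ`, `2 * A = ∫ ρ * h dθ`, `∫ (1 / κ) ds = ∫ ρ ^ 2 dθ`. Hence
`∫ (1 / κ) ds + 6 * A = ∫ (h'' ^ 2 - 5 * h' ^ 2 + 4 * h ^ 2) dθ`. By Parseval this is a sum of
squared Fourier coefficients of `h` with weights `(n ^ 2 - 1) * (n ^ 2 - 4)`, nonnegative at every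
integer `n`, and the term `n = 0` alone is `(2 / π) * L ^ 2`.

That `θ` runs over an interval of length exactly `2 * π` is Hopf's Umlaufsatz. For a simple curve
the secant from time `s` to time `s + u` has a continuous angle `φ (s, u)` on `|u| < L`, with
`φ (s + u, -u) = φ (s, u)`. The secants for `u` and `u - L` are opposite, so
`d = φ (s, u - L) - φ (s, u)` is a constant, congruent to `π` modulo `2 * π`, and the symmetry of
`φ` shows that the tangent turns by `-2 * d` in one period. At a lowest point of the curve the
secants with `u > 0` and those with `u < 0` each stay in a half-plane, so `|d| ≤ 2 * π` and
therefore `|d| = π`.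
-/

open Set
open scoped ComplexConjugate

/-! ### Continuous branches of the argument -/

theorem coe_angle_im_eq_arg_exp (z : ℂ) : (z.im : Angle) = (Complex.exp z).arg := by
  rw [Complex.arg_exp, Angle.coe_toIocMod]

theorem exists_continuousOn_coe_angle_eq_arg {X : Type*} [TopologicalSpace X]
    [LocallyPathConnectedSpace X] {U : Set X} (hUc : IsSimplyConnected U) (hUo : IsOpen U)
    {F : X → ℂ} (hF : ContinuousOn F U) (hF₀ : ∀ x ∈ U, F x ≠ 0) :
    ∃ φ : X → ℝ, ContinuousOn φ U ∧ ∀ x ∈ U, (φ x : Angle) = (F x).arg := by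
  obtain ⟨l, hl, hexp⟩ := Complex.exists_continuousOn_eqOn_exp_comp hUc hUo hF
    fun ⟨x, hx, h⟩ ↦ hF₀ x hx h
  refine ⟨fun x ↦ (l x).im, Complex.continuous_im.comp_continuousOn hl, fun x hx ↦ ?_⟩
  rw [← hexp hx, Function.comp_apply, coe_angle_im_eq_arg_exp]

theorem sub_eq_sub_of_coe_angle_sub_eq {X : Type*} [TopologicalSpace X] {S : Set X}
    (hS : IsPreconnected S) {f g : X → ℝ} (hf : ContinuousOn f S) (hg : ContinuousOn g S)
    {θ : Angle} (hθ : ∀ x ∈ S, (f x : Angle) - g x = θ) {x y : X} (hx : x ∈ S) (hy : y ∈ S) :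
    f x - g x = f y - g y :=
  (AddCircle.isCoveringMap_coe (2 * π)).constOn_of_comp hS (hf.sub hg)
    (fun x hx y hy ↦ (hθ x hx).trans (hθ y hy).symm) hx hy

theorem abs_sub_le_pi_of_sin_nonneg {X : Type*} [TopologicalSpace X] {S : Set X}
    (hS : IsPreconnected S) {f : X → ℝ} (hf : ContinuousOn f S) (hsin : ∀ x ∈ S, 0 ≤ sin (f x))
    {x y : X} (hx : x ∈ S) (hy : y ∈ S) : |f y - f x| ≤ π := by
  wlog hxy : f x ≤ f y generalizing x y
  · exact abs_sub_comm (f y) (f x) ▸ this hy hx (le_of_not_ge hxy)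
  rw [abs_of_nonneg (sub_nonneg.2 hxy)]
  by_contra! hlt
  have hsin_nonneg : ∀ v ∈ Icc (f x) (f y), 0 ≤ sin v := fun v hv ↦ by
    obtain ⟨w, hw, rfl⟩ := (hS.image f hf).ordConnected.out ⟨x, hx, rfl⟩ ⟨y, hy, rfl⟩ hv
    exact hsin w hw
  have hsin_zero : ∀ v ∈ Icc (f x) (f y - π), sin v = 0 := fun v hv ↦ by
    have h := hsin_nonneg (v + π) ⟨by linarith [hv.1, pi_pos], by linarith [hv.2]⟩
    rw [sin_add_pi] at h
    exact le_antisymm (by linarith) (hsin_nonneg v ⟨hv.1, by linarith [hv.2, pi_pos]⟩)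
  obtain ⟨ε, hε, hεlt⟩ := exists_between (lt_min (sub_pos.2 hlt) pi_pos)
  have hεzero : sin ε = 0 := by
    rw [← add_sub_cancel_left (f x) ε, sin_sub,
      hsin_zero (f x) ⟨le_rfl, by linarith⟩,
      hsin_zero (f x + ε) ⟨by linarith, by linarith [(lt_min_iff.1 hεlt).1]⟩]
    ring
  exact (sin_pos_of_pos_of_lt_pi hε (lt_min_iff.1 hεlt).2).ne' hεzero

theorem abs_sub_le_pi_of_sin_nonpos {X : Type*} [TopologicalSpace X] {S : Set X}
    (hS : IsPreconnected S) {f : X → ℝ} (hf : ContinuousOn f S) (hsin : ∀ x ∈ S, sin (f x) ≤ 0)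
    {x y : X} (hx : x ∈ S) (hy : y ∈ S) : |f y - f x| ≤ π := by
  rw [abs_sub_comm, ← neg_sub_neg]
  exact abs_sub_le_pi_of_sin_nonneg hS hf.neg (fun w hw ↦ by simpa using hsin w hw) hx hy

theorem abs_eq_pi_of_coe_angle_eq_pi {x : ℝ} (hx : (x : Angle) = π) (hle : |x| ≤ 2 * π) :
    |x| = π := by
  obtain ⟨k, hk⟩ := Angle.angle_eq_iff_two_pi_dvd_sub.1 hx
  have hx' : x = (2 * k + 1) * π := by linear_combination hk
  have hodd : |2 * k + 1| ≤ 2 := by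
    rw [hx', abs_mul, abs_of_pos pi_pos] at hle
    exact_mod_cast le_of_mul_le_mul_right hle pi_pos
  have hone : |2 * k + 1| = 1 := by grind
  rw [hx', abs_mul, abs_of_pos pi_pos]
  have : |2 * (k : ℝ) + 1| = 1 := by exact_mod_cast hone
  rw [this, one_mul]

/-! ### Simple closed curves have rotation number `±1` -/

section MeanVelocity

variable {E : Type*} [NormedAddCommGroup E] [NormedSpace ℝ E]

/-- The average over the time interval from `s` to `s + u`, where `p = (s, u)`, of the velocity `v`
of a moving point. It extends the difference quotient of the position continuously to `u = 0`. -/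
def meanVelocity (v : ℝ → E) (p : ℝ × ℝ) : E :=
  ∫ t in (0 : ℝ)..1, v (p.1 + t * p.2)

variable {v : ℝ → E}

theorem continuous_meanVelocity (hv : Continuous v) : Continuous (meanVelocity v) :=
  intervalIntegral.continuous_parametric_intervalIntegral_of_continuous'
    (by unfold Function.uncurry; fun_prop) 0 1

theorem meanVelocity_add_neg (v : ℝ → E) (s u : ℝ) :
    meanVelocity v (s + u, -u) = meanVelocity v (s, u) := by
  have h := intervalIntegral.integral_comp_sub_left (fun t ↦ v (s + t * u)) (1 : ℝ)
    (a := 0) (b := 1)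
  rw [sub_self, sub_zero] at h
  rw [meanVelocity, meanVelocity, ← h]
  congr! 3
  ring

theorem meanVelocity_add_period {L : ℝ} (hv : Function.Periodic v L) (s u : ℝ) :
    meanVelocity v (s + L, u) = meanVelocity v (s, u) := by
  simp only [meanVelocity, add_right_comm s L, hv _]

variable [CompleteSpace E]

theorem meanVelocity_zero (v : ℝ → E) (s : ℝ) : meanVelocity v (s, 0) = v s := by
  simp [meanVelocity]

theorem smul_meanVelocity {γ : ℝ → E} (hγ : ∀ s, HasDerivAt γ (v s) s) (hv : Continuous v)
    (s u : ℝ) : u • meanVelocity v (s, u) = γ (s + u) - γ s := by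
  have h := intervalIntegral.integral_unitInterval_deriv_eq_sub (𝕜 := ℝ) (f := γ) (f' := v)
    (z₀ := s) (z₁ := u) (by fun_prop) fun t _ ↦ hγ _
  simpa only [meanVelocity, smul_eq_mul] using h

end MeanVelocity

/-- `γ` is a simple closed curve of period `L`, with continuous and nowhere vanishing
velocity `v`. -/
structure IsRegularSimpleClosed {E : Type*} [NormedAddCommGroup E] [NormedSpace ℝ E]
    (γ v : ℝ → E) (L : ℝ) : Prop where
  period_pos : 0 < L
  hasDerivAt (s : ℝ) : HasDerivAt γ (v s) s
  continuous_velocity : Continuous v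
  velocity_ne_zero (s : ℝ) : v s ≠ 0
  periodic : Function.Periodic γ L
  injOn : InjOn γ (Ico 0 L)

namespace IsRegularSimpleClosed

variable {E : Type*} [NormedAddCommGroup E] [NormedSpace ℝ E] {γ v : ℝ → E} {L : ℝ}

theorem periodic_velocity (hγ : IsRegularSimpleClosed γ v L) : Function.Periodic v L := fun s ↦ by
  have h := (hγ.hasDerivAt (s + L)).comp_add_const s L
  rw [show (fun x ↦ γ (x + L)) = γ from funext hγ.periodic] at h
  exact h.unique (hγ.hasDerivAt s)

theorem apply_add_ne (hγ : IsRegularSimpleClosed γ v L) (s : ℝ) {u : ℝ} (hu₀ : u ≠ 0)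
    (hu : |u| < L) : γ (s + u) ≠ γ s := by
  intro heq
  have hL := hγ.period_pos
  have hmod (r : ℝ) : γ (toIcoMod hL 0 r) = γ r := hγ.periodic.sub_zsmul_eq _
  have hIco (r : ℝ) : toIcoMod hL 0 r ∈ Ico 0 L := by
    simpa only [zero_add] using toIcoMod_mem_Ico hL 0 r
  obtain ⟨n, hn⟩ := toIcoMod_eq_toIcoMod hL |>.1 <|
    hγ.injOn (hIco s) (hIco (s + u)) (by rw [hmod, hmod, heq])
  rw [add_sub_cancel_left, zsmul_eq_mul] at hn
  have hn₀ : |n| < 1 := by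
    rw [hn, abs_mul, abs_of_pos hL, mul_lt_iff_lt_one_left hL] at hu
    exact_mod_cast hu
  exact hu₀ (by rw [hn, Int.abs_lt_one_iff.1 hn₀, Int.cast_zero, zero_mul])

variable [CompleteSpace E]

theorem smul_meanVelocity (hγ : IsRegularSimpleClosed γ v L) (s u : ℝ) :
    u • meanVelocity v (s, u) = γ (s + u) - γ s :=
  _root_.smul_meanVelocity hγ.hasDerivAt hγ.continuous_velocity s u

theorem smul_meanVelocity_sub_period (hγ : IsRegularSimpleClosed γ v L) (s u : ℝ) :
    (u - L) • meanVelocity v (s, u - L) = u • meanVelocity v (s, u) := by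
  rw [hγ.smul_meanVelocity, hγ.smul_meanVelocity, ← add_sub_assoc, hγ.periodic.sub_eq]

theorem meanVelocity_ne_zero (hγ : IsRegularSimpleClosed γ v L) (s : ℝ) {u : ℝ}
    (hu : u ∈ Ioo (-L) L) : meanVelocity v (s, u) ≠ 0 := by
  rcases eq_or_ne u 0 with rfl | hu₀
  · rw [meanVelocity_zero]
    exact hγ.velocity_ne_zero s
  · intro h
    have hchord := hγ.smul_meanVelocity s u
    rw [h, smul_zero, eq_comm, sub_eq_zero] at hchord
    exact hγ.apply_add_ne s hu₀ (abs_lt.2 hu) hchord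

end IsRegularSimpleClosed

/-- `φ (s, u)` is a continuous choice, for `|u| < L`, of the angle of the oriented secant through
the points at times `s` and `s + u` of a plane curve with velocity `v`; the orientation is that of
increasing time, and `u = 0` gives the tangent. -/
structure IsSecantAngle (v : ℝ → ℂ) (L : ℝ) (φ : ℝ × ℝ → ℝ) : Prop where
  continuousOn : ContinuousOn φ (univ ×ˢ Ioo (-L) L)
  coe_eq_arg : ∀ p ∈ univ ×ˢ Ioo (-L) L, (φ p : Angle) = (meanVelocity v p).arg

theorem IsRegularSimpleClosed.exists_isSecantAngle {z v : ℝ → ℂ} {L : ℝ}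
    (hz : IsRegularSimpleClosed z v L) : ∃ φ, IsSecantAngle v L φ := by
  have hsc : IsSimplyConnected (univ ×ˢ Ioo (-L) L : Set (ℝ × ℝ)) := by
    have := (convex_univ.prod (convex_Ioo (-L) L)).contractibleSpace (E := ℝ × ℝ)
      ⟨(0, 0), by simp [hz.period_pos]⟩
    exact SimplyConnectedSpace.ofContractible _
  obtain ⟨φ, hφ, hφv⟩ := exists_continuousOn_coe_angle_eq_arg hsc (isOpen_univ.prod isOpen_Ioo)
    (continuous_meanVelocity hz.continuous_velocity).continuousOn
    fun p hp ↦ hz.meanVelocity_ne_zero p.1 hp.2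
  exact ⟨φ, hφ, hφv⟩

namespace IsSecantAngle

variable {z v : ℝ → ℂ} {L : ℝ} {φ : ℝ × ℝ → ℝ}

theorem apply_add_neg (hφ : IsSecantAngle v L φ) (s : ℝ) {u : ℝ} (hu : u ∈ Ioo (-L) L) :
    φ (s + u, -u) = φ (s, u) := by
  have hmem : MapsTo (fun p : ℝ × ℝ ↦ (p.1 + p.2, -p.2)) (univ ×ˢ Ioo (-L) L)
      (univ ×ˢ Ioo (-L) L) := fun p hp ↦ ⟨trivial, neg_lt_neg hp.2.2, neg_lt.1 hp.2.1⟩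
  have hconst := sub_eq_sub_of_coe_angle_sub_eq (f := fun p ↦ φ (p.1 + p.2, -p.2)) (θ := 0)
    (x := (s, u)) (y := (s, 0)) (isPreconnected_univ.prod isPreconnected_Ioo)
    (hφ.continuousOn.comp (by fun_prop) hmem) hφ.continuousOn
    (fun p hp ↦ by
      rw [hφ.coe_eq_arg _ (hmem hp), hφ.coe_eq_arg p hp, meanVelocity_add_neg, sub_self])
    ⟨trivial, hu⟩ ⟨trivial, by constructor <;> linarith [hu.1, hu.2]⟩
  simpa [sub_eq_zero] using hconst

theorem apply_add_period_sub (hφ : IsSecantAngle v L φ) (hper : Function.Periodic v L) (s t : ℝ)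
    {u w : ℝ} (hu : u ∈ Ioo (-L) L) (hw : w ∈ Ioo (-L) L) :
    φ (s + L, u) - φ (s, u) = φ (t + L, w) - φ (t, w) := by
  have hmem : MapsTo (fun p : ℝ × ℝ ↦ (p.1 + L, p.2)) (univ ×ˢ Ioo (-L) L)
      (univ ×ˢ Ioo (-L) L) := fun p hp ↦ ⟨trivial, hp.2⟩
  exact sub_eq_sub_of_coe_angle_sub_eq (f := fun p ↦ φ (p.1 + L, p.2)) (θ := 0)
    (x := (s, u)) (y := (t, w)) (isPreconnected_univ.prod isPreconnected_Ioo)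
    (hφ.continuousOn.comp (by fun_prop) hmem) hφ.continuousOn
    (fun p hp ↦ by
      rw [hφ.coe_eq_arg _ (hmem hp), hφ.coe_eq_arg p hp, meanVelocity_add_period hper, sub_self])
    ⟨trivial, hu⟩ ⟨trivial, hw⟩

theorem apply_zero_sub_tangentAngle (hφ : IsSecantAngle v L φ) (hL : 0 < L) {α : ℝ → ℝ}
    (hα : Continuous α) (hαv : ∀ s, (α s : Angle) = (v s).arg) (s t : ℝ) :
    φ (s, 0) - α s = φ (t, 0) - α t := by
  have hmem : MapsTo (fun r : ℝ ↦ (r, (0 : ℝ))) univ (univ ×ˢ Ioo (-L) L) :=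
    fun r _ ↦ ⟨trivial, by simp [hL]⟩
  exact sub_eq_sub_of_coe_angle_sub_eq (f := fun r ↦ φ (r, 0)) (θ := 0) isPreconnected_univ
    (hφ.continuousOn.comp (by fun_prop) hmem) hα.continuousOn
    (fun r hr ↦ by rw [hφ.coe_eq_arg _ (hmem hr), hαv, meanVelocity_zero, sub_self])
    (mem_univ s) (mem_univ t)

theorem coe_apply_sub_period_sub (hφ : IsSecantAngle v L φ) (hz : IsRegularSimpleClosed z v L)
    (s : ℝ) {u : ℝ} (hu : u ∈ Ioo 0 L) : (φ (s, u - L) : Angle) - φ (s, u) = π := by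
  have huL : u ∈ Ioo (-L) L := ⟨by linarith [hu.1, hu.2], hu.2⟩
  have huL' : u - L ∈ Ioo (-L) L := ⟨by linarith [hu.1], by linarith [hu.1, hu.2]⟩
  have hopp : ((L - u : ℝ) : ℂ) * meanVelocity v (s, u - L)
      = -((u : ℝ) * meanVelocity v (s, u)) := by
    have h := hz.smul_meanVelocity_sub_period s u
    simp only [Complex.real_smul] at h
    push_cast at h ⊢
    linear_combination -h
  have harg : ((meanVelocity v (s, u - L)).arg : Angle) = (meanVelocity v (s, u)).arg + π := by
    rw [← Complex.arg_real_mul _ (sub_pos.2 hu.2), hopp, Complex.arg_neg_coe_angle,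
      Complex.arg_real_mul _ hu.1]
    exact mul_ne_zero (Complex.ofReal_ne_zero.2 hu.1.ne') (hz.meanVelocity_ne_zero s huL)
  rw [hφ.coe_eq_arg _ ⟨trivial, huL'⟩, hφ.coe_eq_arg _ ⟨trivial, huL⟩, harg, add_sub_cancel_left]

theorem apply_sub_period_sub (hφ : IsSecantAngle v L φ) (hz : IsRegularSimpleClosed z v L)
    (s t : ℝ) {u w : ℝ} (hu : u ∈ Ioo 0 L) (hw : w ∈ Ioo 0 L) :
    φ (s, u - L) - φ (s, u) = φ (t, w - L) - φ (t, w) := by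
  have hmem : MapsTo (fun p : ℝ × ℝ ↦ (p.1, p.2 - L)) (univ ×ˢ Ioo 0 L) (univ ×ˢ Ioo (-L) L) :=
    fun p hp ↦ ⟨trivial, by linarith [hp.2.1], by linarith [hp.2.1, hp.2.2]⟩
  have hsub : (univ ×ˢ Ioo 0 L : Set (ℝ × ℝ)) ⊆ univ ×ˢ Ioo (-L) L :=
    fun p hp ↦ ⟨trivial, by linarith [hp.2.1, hp.2.2], hp.2.2⟩
  exact sub_eq_sub_of_coe_angle_sub_eq (f := fun p ↦ φ (p.1, p.2 - L))
    (x := (s, u)) (y := (t, w)) (isPreconnected_univ.prod isPreconnected_Ioo)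
    (hφ.continuousOn.comp (by fun_prop) hmem) (hφ.continuousOn.mono hsub)
    (fun p hp ↦ hφ.coe_apply_sub_period_sub hz p.1 hp.2) ⟨trivial, hu⟩ ⟨trivial, hw⟩

theorem apply_add_period_zero_sub (hφ : IsSecantAngle v L φ) (hz : IsRegularSimpleClosed z v L)
    (s t : ℝ) : φ (s + L, 0) - φ (s, 0) = -2 * (φ (t, -(L / 2)) - φ (t, L / 2)) := by
  have hL := hz.period_pos
  have hhalf : L / 2 ∈ Ioo 0 L := ⟨half_pos hL, half_lt_self hL⟩
  have hhalf' : L / 2 ∈ Ioo (-L) L := ⟨by linarith, half_lt_self hL⟩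
  have hjump (r : ℝ) : φ (r, -(L / 2)) - φ (r, L / 2) = φ (t, -(L / 2)) - φ (t, L / 2) := by
    have h := hφ.apply_sub_period_sub hz r t hhalf hhalf
    rwa [show L / 2 - L = -(L / 2) by ring] at h
  have hshift : φ (s + L, 0) - φ (s, 0) = φ (s + L, -(L / 2)) - φ (s, -(L / 2)) :=
    hφ.apply_add_period_sub hz.periodic_velocity s s (by simp [hL]) ⟨by linarith, by linarith⟩
  have hfirst : φ (s + L / 2, -(L / 2)) = φ (s, L / 2) := hφ.apply_add_neg s hhalf'
  have hsecond : φ (s + L, -(L / 2)) = φ (s + L / 2, L / 2) := by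
    have h := hφ.apply_add_neg (s + L / 2) hhalf'
    rwa [add_assoc, add_halves] at h
  linarith [hjump s, hjump (s + L / 2)]

theorem mul_sin_apply_nonneg (hφ : IsSecantAngle v L φ) (hz : IsRegularSimpleClosed z v L)
    {s : ℝ} (hs : ∀ t, (z s).im ≤ (z t).im) {u : ℝ} (hu : u ∈ Ioo (-L) L) :
    0 ≤ u * sin (φ (s, u)) := by
  rw [← Angle.sin_coe, hφ.coe_eq_arg (s, u) ⟨trivial, hu⟩, Angle.sin_coe, Complex.sin_arg,
    mul_div_assoc', ← smul_eq_mul, ← Complex.smul_im, hz.smul_meanVelocity, Complex.sub_im]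
  exact div_nonneg (sub_nonneg.2 (hs _)) (norm_nonneg _)

theorem sin_apply_zero (hφ : IsSecantAngle v L φ) (hz : IsRegularSimpleClosed z v L)
    {s : ℝ} (hs : ∀ t, (z s).im ≤ (z t).im) : sin (φ (s, 0)) = 0 := by
  have hderiv : HasDerivAt (fun t ↦ (z t).im) (v s).im s :=
    Complex.imCLM.hasFDerivAt.comp_hasDerivAt s (hz.hasDerivAt s)
  have him : (v s).im = 0 := IsLocalMin.hasDerivAt_eq_zero (.of_forall hs) hderiv
  rw [← Angle.sin_coe, hφ.coe_eq_arg (s, 0) ⟨trivial, by simp [hz.period_pos]⟩, Angle.sin_coe,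
    Complex.sin_arg, meanVelocity_zero, him, zero_div]

theorem abs_apply_neg_sub_apply_le (hφ : IsSecantAngle v L φ) (hz : IsRegularSimpleClosed z v L)
    {s : ℝ} (hs : ∀ t, (z s).im ≤ (z t).im) {u : ℝ} (hu : u ∈ Ioo 0 L) :
    |φ (s, -u) - φ (s, u)| ≤ 2 * π := by
  have hcont {S : Set ℝ} (hS : S ⊆ Ioo (-L) L) : ContinuousOn (fun w ↦ φ (s, w)) S :=
    hφ.continuousOn.comp (by fun_prop) fun w hw ↦ ⟨trivial, hS hw⟩
  have hsub : Ico 0 L ⊆ Ioo (-L) L := fun w hw ↦ ⟨by linarith [hw.1, hw.2], hw.2⟩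
  have hsub' : Ioc (-L) 0 ⊆ Ioo (-L) L := fun w hw ↦ ⟨hw.1, by linarith [hw.1, hw.2]⟩
  have hfwd : |φ (s, u) - φ (s, 0)| ≤ π := by
    refine abs_sub_le_pi_of_sin_nonneg isPreconnected_Ico (hcont hsub) (fun w hw ↦ ?_)
      (left_mem_Ico.2 hz.period_pos) ⟨hu.1.le, hu.2⟩
    rcases hw.1.eq_or_lt with rfl | hw₀
    · exact (hφ.sin_apply_zero hz hs).ge
    · exact nonneg_of_mul_nonneg_right (hφ.mul_sin_apply_nonneg hz hs (hsub hw)) hw₀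
  have hbwd : |φ (s, -u) - φ (s, 0)| ≤ π := by
    refine abs_sub_le_pi_of_sin_nonpos isPreconnected_Ioc (hcont hsub') (fun w hw ↦ ?_)
      (right_mem_Ioc.2 (neg_lt_zero.2 hz.period_pos)) ⟨neg_lt_neg hu.2, by linarith [hu.1]⟩
    rcases hw.2.eq_or_lt with rfl | hw₀
    · exact (hφ.sin_apply_zero hz hs).le
    · exact nonpos_of_mul_nonneg_right (hφ.mul_sin_apply_nonneg hz hs (hsub' hw)) hw₀
  calc |φ (s, -u) - φ (s, u)| ≤ |φ (s, -u) - φ (s, 0)| + |φ (s, 0) - φ (s, u)| :=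
        abs_sub_le _ _ _
    _ ≤ 2 * π := by rw [abs_sub_comm (φ (s, 0))]; linarith

end IsSecantAngle

theorem IsRegularSimpleClosed.abs_tangentAngle_add_period_sub {z v : ℝ → ℂ} {L : ℝ}
    (hz : IsRegularSimpleClosed z v L) {α : ℝ → ℝ} (hα : Continuous α)
    (hαv : ∀ s, (α s : Angle) = (v s).arg) (s : ℝ) : |α (s + L) - α s| = 2 * π := by
  obtain ⟨φ, hφ⟩ := hz.exists_isSecantAngle
  have hL := hz.period_pos
  have hcont : Continuous fun t ↦ (z t).im := Complex.continuous_im.comp <|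
    continuous_iff_continuousAt.2 fun t ↦ (hz.hasDerivAt t).continuousAt
  obtain ⟨_, ⟨s₀, rfl⟩, hs₀⟩ := ((hz.periodic.comp Complex.im).compact_of_continuous hL.ne'
    hcont).exists_isLeast (range_nonempty _)
  have hhalf : L / 2 ∈ Ioo 0 L := ⟨half_pos hL, half_lt_self hL⟩
  have hjump : |φ (s₀, -(L / 2)) - φ (s₀, L / 2)| = π := by
    refine abs_eq_pi_of_coe_angle_eq_pi ?_
      (hφ.abs_apply_neg_sub_apply_le hz (fun t ↦ hs₀ (mem_range_self t)) hhalf)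
    rw [Angle.coe_sub, ← hφ.coe_apply_sub_period_sub hz s₀ hhalf,
      show L / 2 - L = -(L / 2) by ring]
  rw [show α (s + L) - α s = φ (s + L, 0) - φ (s, 0) by
      linarith [hφ.apply_zero_sub_tangentAngle hL hα hαv (s + L) s],
    hφ.apply_add_period_zero_sub hz s s₀, abs_mul, hjump, abs_neg, abs_two]

/-! ### Fourier series -/

theorem fourierCoeffOn_hasDerivAt_of_eq {a b : ℝ} (hab : a < b) {f f' : ℝ → ℂ}
    (hf : ∀ x ∈ uIcc a b, HasDerivAt f (f' x) x) (hf' : IntervalIntegrable f' volume a b)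
    (heq : f a = f b) (n : ℤ) :
    fourierCoeffOn hab f' n = 2 * π * Complex.I * n / (b - a) * fourierCoeffOn hab f n := by
  rcases eq_or_ne n 0 with rfl | hn
  · simp [fourierCoeffOn_eq_integral, intervalIntegral.integral_eq_sub_of_hasDerivAt hf hf', heq]
  · have hπ : (π : ℂ) ≠ 0 := Complex.ofReal_ne_zero.2 pi_ne_zero
    have hn' : (n : ℂ) ≠ 0 := Int.cast_ne_zero.2 hn
    have hba : (b - a : ℂ) ≠ 0 := by exact_mod_cast (sub_pos.2 hab).ne'
    rw [fourierCoeffOn_of_hasDerivAt hab hn hf hf', heq, sub_self]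
    field_simp
    ring

theorem hasSum_sq_norm_fourierCoeffOn_ofReal {a b : ℝ} (hab : a < b) {f : ℝ → ℝ}
    (hf : ContinuousOn f (Icc a b)) :
    HasSum (fun n : ℤ ↦ ‖fourierCoeffOn hab (fun x ↦ (f x : ℂ)) n‖ ^ 2)
      ((b - a)⁻¹ * ∫ x in a..b, f x ^ 2) := by
  have hL2 : MemLp (fun x ↦ (f x : ℂ)) 2 (volume.restrict (Ioc a b)) :=
    ((memLp_two_iff_integrable_sq
      ((hf.mono Ioc_subset_Icc_self).aestronglyMeasurable measurableSet_Ioc)).2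
      ((hf.pow 2).integrableOn_Icc.mono_set Ioc_subset_Icc_self)).ofReal
  simpa using hasSum_sq_fourierCoeffOn hab hL2

theorem sq_norm_fourierCoeffOn_zero_ofReal {a b : ℝ} (hab : a < b) (f : ℝ → ℝ) :
    ‖fourierCoeffOn hab (fun x ↦ (f x : ℂ)) 0‖ ^ 2 = ((b - a)⁻¹ * ∫ x in a..b, f x) ^ 2 := by
  have h : fourierCoeffOn hab (fun x ↦ (f x : ℂ)) 0 = ((b - a)⁻¹ * ∫ x in a..b, f x : ℝ) := by
    simp [fourierCoeffOn_eq_integral, intervalIntegral.integral_ofReal]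
  rw [h, Complex.norm_real, norm_eq_abs, sq_abs]

theorem lt_add_two_pi (a : ℝ) : a < a + 2 * π := lt_add_of_pos_right a two_pi_pos

theorem sq_norm_fourierCoeffOn_hasDerivAt {a : ℝ} {f f' : ℝ → ℝ}
    (hf : ∀ x, HasDerivAt f (f' x) x) (hf' : Continuous f') (heq : f (a + 2 * π) = f a) (n : ℤ) :
    ‖fourierCoeffOn (lt_add_two_pi a) (fun x ↦ (f' x : ℂ)) n‖ ^ 2 =
      n ^ 2 * ‖fourierCoeffOn (lt_add_two_pi a) (fun x ↦ (f x : ℂ)) n‖ ^ 2 := by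
  rw [fourierCoeffOn_hasDerivAt_of_eq _ (fun x _ ↦ (hf x).ofReal_comp)
    ((Complex.continuous_ofReal.comp hf').intervalIntegrable _ _) (by rw [heq])]
  simp [mul_pow]

theorem sq_sub_one_mul_sq_sub_four_nonneg (n : ℤ) : 0 ≤ (n ^ 2 - 1) * (n ^ 2 - 4) := by
  rcases le_or_gt |n| 1 with h | h
  · have hsq : n ^ 2 ≤ 1 := (sq_le_one_iff_abs_le_one n).2 h
    exact mul_nonneg_of_nonpos_of_nonpos (by linarith) (by linarith)
  · have hsq : 2 ^ 2 ≤ n ^ 2 := sq_le_sq.2 (show |2| ≤ |n| from h)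
    exact mul_nonneg (by linarith) (by linarith)

theorem sq_integral_le_of_hasDerivAt {a : ℝ} {h p q : ℝ → ℝ} (hh : ∀ x, HasDerivAt h (p x) x)
    (hp : ∀ x, HasDerivAt p (q x) x) (hq : Continuous q) (h_eq : h (a + 2 * π) = h a)
    (p_eq : p (a + 2 * π) = p a) :
    2 / π * (∫ x in a..a + 2 * π, h x) ^ 2 ≤ (∫ x in a..a + 2 * π, q x ^ 2)
      - 5 * (∫ x in a..a + 2 * π, p x ^ 2) + 4 * ∫ x in a..a + 2 * π, h x ^ 2 := by
  have hcont : Continuous h := continuous_iff_continuousAt.2 fun x ↦ (hh x).continuousAt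
  have pcont : Continuous p := continuous_iff_continuousAt.2 fun x ↦ (hp x).continuousAt
  have hab := lt_add_two_pi a
  set c : ℤ → ℝ := fun n ↦ ‖fourierCoeffOn hab (fun x ↦ (h x : ℂ)) n‖ ^ 2
  have hpc (n : ℤ) : ‖fourierCoeffOn hab (fun x ↦ (p x : ℂ)) n‖ ^ 2 = n ^ 2 * c n :=
    sq_norm_fourierCoeffOn_hasDerivAt hh pcont h_eq n
  have hqc (n : ℤ) : ‖fourierCoeffOn hab (fun x ↦ (q x : ℂ)) n‖ ^ 2 = n ^ 2 * (n ^ 2 * c n) := by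
    rw [sq_norm_fourierCoeffOn_hasDerivAt hp hq p_eq, hpc]
  have hsum := ((hasSum_sq_norm_fourierCoeffOn_ofReal hab hq.continuousOn).sub
    ((hasSum_sq_norm_fourierCoeffOn_ofReal hab pcont.continuousOn).mul_left 5)).add
    ((hasSum_sq_norm_fourierCoeffOn_ofReal hab hcont.continuousOn).mul_left 4)
  simp only [hpc, hqc] at hsum
  have hzero := le_hasSum hsum 0 fun n _ ↦ by
    have hn : (0 : ℝ) ≤ (n ^ 2 - 1) * (n ^ 2 - 4) := by
      exact_mod_cast sq_sub_one_mul_sq_sub_four_nonneg n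
    calc (0 : ℝ) ≤ (n ^ 2 - 1) * (n ^ 2 - 4) * c n := mul_nonneg hn (sq_nonneg _)
      _ = n ^ 2 * (n ^ 2 * c n) - 5 * (n ^ 2 * c n) + 4 * c n := by ring
  simp only [c, sq_norm_fourierCoeffOn_zero_ofReal, add_sub_cancel_left, Int.cast_zero] at hzero
  have hscaled := mul_le_mul_of_nonneg_left hzero two_pi_pos.le
  field_simp at hscaled ⊢
  linarith

/-! ### The deficit inequality in the tangent angle -/

-- `w θ = conj (ζ θ) * exp (θ * I)` for a curve `ζ` with `ζ' θ = ρ θ * exp (θ * I)`: the imaginary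
-- part of `w` is the support function of `ζ` and the real part is its derivative.
theorem sq_integral_le_of_hasDerivAt_add_I_mul {a : ℝ} {w : ℝ → ℂ} {ρ : ℝ → ℝ}
    (hw : ∀ θ, HasDerivAt w (ρ θ + Complex.I * w θ) θ) (hρ : Continuous ρ)
    (hper : w (a + 2 * π) = w a) :
    2 / π * (∫ θ in a..a + 2 * π, ρ θ) ^ 2 ≤
      (∫ θ in a..a + 2 * π, ρ θ ^ 2) + 3 * ∫ θ in a..a + 2 * π, ρ θ * (w θ).im := by
  set h : ℝ → ℝ := fun θ ↦ (w θ).im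
  set p : ℝ → ℝ := fun θ ↦ (w θ).re
  have hh (θ : ℝ) : HasDerivAt h (p θ) θ := by
    simpa [Function.comp_def] using Complex.imCLM.hasFDerivAt.comp_hasDerivAt θ (hw θ)
  have hp (θ : ℝ) : HasDerivAt p (ρ θ - h θ) θ := by
    simpa [Function.comp_def, sub_eq_add_neg] using
      Complex.reCLM.hasFDerivAt.comp_hasDerivAt θ (hw θ)
  have hcont : Continuous h := continuous_iff_continuousAt.2 fun x ↦ (hh x).continuousAt
  have pcont : Continuous p := continuous_iff_continuousAt.2 fun x ↦ (hp x).continuousAt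
  have h_eq : h (a + 2 * π) = h a := by simp only [h, hper]
  have p_eq : p (a + 2 * π) = p a := by simp only [p, hper]
  have hlength : ∫ θ in a..a + 2 * π, ρ θ = ∫ θ in a..a + 2 * π, h θ := by
    rw [← sub_eq_zero, ← intervalIntegral.integral_sub (hρ.intervalIntegrable _ _)
      (hcont.intervalIntegrable _ _), intervalIntegral.integral_eq_sub_of_hasDerivAt
      (fun θ _ ↦ hp θ) ((hρ.sub hcont).intervalIntegrable _ _), p_eq, sub_self]
  have hparts : ∫ θ in a..a + 2 * π, (p θ * p θ + h θ * (ρ θ - h θ)) = 0 := by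
    rw [intervalIntegral.integral_eq_sub_of_hasDerivAt (fun θ _ ↦ (hh θ).mul (hp θ))
      (Continuous.intervalIntegrable (by fun_prop) _ _)]
    simp only [Pi.mul_apply, h_eq, p_eq, sub_self]
  rw [hlength]
  refine (sq_integral_le_of_hasDerivAt hh hp (hρ.sub hcont) h_eq p_eq).trans_eq ?_
  trans (∫ θ in a..a + 2 * π, ρ θ ^ 2) + 3 * (∫ θ in a..a + 2 * π, ρ θ * h θ)
    - 5 * ∫ θ in a..a + 2 * π, (p θ * p θ + h θ * (ρ θ - h θ))
  · simp only [← intervalIntegral.integral_const_mul]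
    rw [← intervalIntegral.integral_sub, ← intervalIntegral.integral_add,
      ← intervalIntegral.integral_add, ← intervalIntegral.integral_sub]
    · congr! 2
      ring
    all_goals exact Continuous.intervalIntegrable (by fun_prop) _ _
  · rw [hparts, mul_zero, sub_zero]

/-! ### Parametrisation by the tangent angle -/

theorem surjective_of_map_add_const {f : ℝ → ℝ} (hf : Continuous f) {a b : ℝ} (hb : 0 < b)
    (hadd : ∀ x, f (x + a) = f x + b) : Function.Surjective f := fun y ↦ by
  let F : AddConstMap ℝ ℝ a b := ⟨f, hadd⟩
  obtain ⟨n, ⟨hle, hlt⟩, -⟩ := existsUnique_add_zsmul_mem_Ico hb (f 0) y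
  have hval (m : ℤ) : f (m • a) = f 0 + m • b := by
    simpa [F] using AddConstMapClass.map_add_zsmul F 0 m
  refine mem_range_of_exists_le_of_exists_ge hf ⟨(n - 1) • a, ?_⟩ ⟨n • a, ?_⟩
  · rw [hval, sub_zsmul, one_zsmul]
    linarith
  · rwa [hval]

theorem exists_leftInverse_hasDerivAt {f f' : ℝ → ℝ} (hf : ∀ x, HasDerivAt f (f' x) x)
    (hpos : ∀ x, 0 < f' x) (hsurj : Function.Surjective f) :
    ∃ g : ℝ → ℝ, Function.LeftInverse g f ∧ ∀ y, HasDerivAt g (f' (g y))⁻¹ y := by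
  let e := (strictMono_of_hasDerivAt_pos hf hpos).orderIsoOfSurjective f hsurj
  exact ⟨e.symm, e.symm_apply_apply, fun y ↦
    .of_local_left_inverse e.symm.continuous.continuousAt (hf _) (hpos _).ne'
      (.of_forall e.apply_symm_apply)⟩

theorem exists_hasDerivAt_exp_eq {f f' : ℝ → ℂ} (hf : ∀ s, HasDerivAt f (f' s) s)
    (hf' : Continuous f') (hf₀ : ∀ s, f s ≠ 0) :
    ∃ l : ℝ → ℂ, (∀ s, HasDerivAt l (f' s / f s) s) ∧ ∀ s, Complex.exp (l s) = f s := by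
  have hcont : Continuous fun s ↦ f' s / f s :=
    hf'.div₀ (continuous_iff_continuousAt.2 fun s ↦ (hf s).continuousAt) hf₀
  let l : ℝ → ℂ := fun s ↦ Complex.log (f 0) + ∫ t in (0 : ℝ)..s, f' t / f t
  have hl (s : ℝ) : HasDerivAt l (f' s / f s) s :=
    (hcont.integral_hasStrictDerivAt 0 s).hasDerivAt.const_add _
  have hquot (s : ℝ) : HasDerivAt (fun s ↦ Complex.exp (l s) / f s) 0 s :=
    ((hl s).cexp.div (hf s) (hf₀ s)).congr_deriv (by field_simp [hf₀ s]; ring)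
  refine ⟨l, hl, fun s ↦ ?_⟩
  have hconst := is_const_of_deriv_eq_zero (fun s ↦ (hquot s).differentiableAt)
    (fun s ↦ (hquot s).deriv) s 0
  have hl₀ : Complex.exp (l 0) = f 0 := by simp [l, Complex.exp_log (hf₀ 0)]
  rwa [hl₀, div_self (hf₀ 0), div_eq_one_iff_eq (hf₀ s)] at hconst

theorem exists_tangentAngle {v v' : ℝ → ℂ} (hv : ∀ s, HasDerivAt v (v' s) s)
    (hv' : Continuous v') (hnorm : ∀ s, ‖v s‖ = 1) :
    ∃ α : ℝ → ℝ, (∀ s, HasDerivAt α (conj (v s) * v' s).im s) ∧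
      ∀ s, v s = Complex.exp (α s * Complex.I) := by
  obtain ⟨l, hl, hexp⟩ := exists_hasDerivAt_exp_eq hv hv' fun s ↦
    norm_ne_zero_iff.1 (by rw [hnorm]; exact one_ne_zero)
  have hquot (s : ℝ) : v' s / v s = conj (v s) * v' s := by
    rw [div_eq_inv_mul, Complex.inv_eq_conj (hnorm s)]
  refine ⟨fun s ↦ (l s).im, fun s ↦ hquot s ▸ Complex.imCLM.hasFDerivAt.comp_hasDerivAt s (hl s),
    fun s ↦ ?_⟩
  have hre : (l s).re = 0 := by
    rw [← Real.exp_eq_one_iff, ← Complex.norm_exp, hexp, hnorm]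
  rw [← hexp s, ← Complex.re_add_im (l s), hre]
  simp

theorem hasDerivAt_conj_mul_exp_tangentAngle {z : ℝ → ℂ} {α : ℝ → ℝ} {s k : ℝ}
    (hz : HasDerivAt z (Complex.exp (α s * Complex.I)) s) (hα : HasDerivAt α k s) :
    HasDerivAt (fun t ↦ conj (z t) * Complex.exp (α t * Complex.I))
      (1 + k * (Complex.I * (conj (z s) * Complex.exp (α s * Complex.I)))) s := by
  have hunit : star (Complex.exp (α s * Complex.I)) * Complex.exp (α s * Complex.I) = 1 := by
    rw [Complex.star_def, Complex.conj_mul', Complex.norm_exp_ofReal_mul_I, Complex.ofReal_one,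
      one_pow]
  refine (hz.star.mul (hα.ofReal_comp.mul_const Complex.I).cexp).congr_deriv ?_
  rw [hunit, Complex.star_def]
  ring

theorem sq_le_integral_inv_of_tangentAngle {z : ℝ → ℂ} {α κ : ℝ → ℝ} {L : ℝ}
    (hz : ∀ s, HasDerivAt z (Complex.exp (α s * Complex.I)) s) (hα : ∀ s, HasDerivAt α (κ s) s)
    (hκ : Continuous κ) (hpos : ∀ s, 0 < κ s) (hclosed : z L = z 0)
    (hturn : ∀ s, α (s + L) = α s + 2 * π) :
    2 / π * L ^ 2 ≤ (∫ s in 0..L, (κ s)⁻¹) +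
      3 * ∫ s in 0..L, (conj (z s) * Complex.exp (α s * Complex.I)).im := by
  have zcont : Continuous z := continuous_iff_continuousAt.2 fun s ↦ (hz s).continuousAt
  have αcont : Continuous α := continuous_iff_continuousAt.2 fun s ↦ (hα s).continuousAt
  have invcont : Continuous fun s ↦ (κ s)⁻¹ := hκ.inv₀ fun s ↦ (hpos s).ne'
  obtain ⟨σ, hσα, hσ⟩ := exists_leftInverse_hasDerivAt hα hpos
    (surjective_of_map_add_const αcont two_pi_pos hturn)
  have σcont : Continuous σ := continuous_iff_continuousAt.2 fun θ ↦ (hσ θ).continuousAt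
  have hturn₀ : α L = α 0 + 2 * π := by simpa using hturn 0
  have hσL : σ (α 0 + 2 * π) = L := by rw [← hturn₀, hσα]
  have hsubst {g : ℝ → ℝ} (hg : Continuous g) :
      ∫ θ in α 0..α 0 + 2 * π, g (σ θ) * (κ (σ θ))⁻¹ = ∫ s in 0..L, g s := by
    simpa only [Function.comp_apply, hσα 0, hσL] using
      intervalIntegral.integral_comp_mul_deriv (a := α 0) (b := α 0 + 2 * π) (fun θ _ ↦ hσ θ)
        (invcont.comp σcont).continuousOn hg
  set W : ℝ → ℂ := fun s ↦ conj (z s) * Complex.exp (α s * Complex.I)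
  have hW (s : ℝ) : HasDerivAt W (1 + κ s * (Complex.I * W s)) s :=
    hasDerivAt_conj_mul_exp_tangentAngle (hz s) (hα s)
  have hw (θ : ℝ) : HasDerivAt (W ∘ σ) (((κ (σ θ))⁻¹ : ℝ) + Complex.I * (W ∘ σ) θ) θ := by
    have hne : (κ (σ θ) : ℂ) ≠ 0 := Complex.ofReal_ne_zero.2 (hpos _).ne'
    refine ((hW (σ θ)).scomp θ (hσ θ)).congr_deriv ?_
    rw [Complex.real_smul, Complex.ofReal_inv, Function.comp_apply]
    field_simp
  have hwper : (W ∘ σ) (α 0 + 2 * π) = (W ∘ σ) (α 0) := by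
    simp only [Function.comp_apply, hσα 0, hσL, W, hclosed, hturn₀]
    push_cast
    rw [add_mul, Complex.exp_periodic]
  have hlength : ∫ θ in α 0..α 0 + 2 * π, (κ (σ θ))⁻¹ = L := by
    simpa using hsubst (g := fun _ ↦ 1) continuous_const
  have hWim : Continuous fun s ↦ (W s).im := by fun_prop
  simpa only [hlength, sq, hsubst invcont, Function.comp_apply, mul_comm (κ _)⁻¹ (W _).im,
    hsubst hWim] using sq_integral_le_of_hasDerivAt_add_I_mul hw (invcont.comp σcont) hwper

/-! ### Convex curves -/

theorem IsRegularSimpleClosed.tangentAngle_add_period {z v : ℝ → ℂ} {L : ℝ}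
    (hz : IsRegularSimpleClosed z v L) {α : ℝ → ℝ} (hα : Continuous α) (hmono : StrictMono α)
    (hαv : ∀ s, (α s : Angle) = (v s).arg) (s : ℝ) : α (s + L) = α s + 2 * π := by
  have hlt : α s < α (s + L) := hmono (lt_add_of_pos_right s hz.period_pos)
  rw [← hz.abs_tangentAngle_add_period_sub hα hαv s, abs_of_pos (sub_pos.2 hlt),
    add_sub_cancel]

theorem IsRegularSimpleClosed.sq_le_integral_inv_curvature {z v a : ℝ → ℂ} {L : ℝ}
    (hz : IsRegularSimpleClosed z v L) (hv : ∀ s, HasDerivAt v (a s) s) (ha : Continuous a)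
    (hnorm : ∀ s, ‖v s‖ = 1) (hpos : ∀ s, 0 < (conj (v s) * a s).im) :
    2 / π * L ^ 2 ≤ (∫ s in 0..L, ((conj (v s) * a s).im)⁻¹) +
      3 * ∫ s in 0..L, (conj (z s) * v s).im := by
  obtain ⟨α, hα, hαv⟩ := exists_tangentAngle hv ha hnorm
  have αcont : Continuous α := continuous_iff_continuousAt.2 fun s ↦ (hα s).continuousAt
  have hvcont := hz.continuous_velocity
  have harg (s : ℝ) : (α s : Angle) = (v s).arg := by
    rw [hαv, ← coe_angle_im_eq_arg_exp, Complex.im_ofReal_mul, Complex.I_im, mul_one]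
  have hturn := hz.tangentAngle_add_period αcont (strictMono_of_hasDerivAt_pos hα hpos) harg
  simpa only [← hαv] using sq_le_integral_inv_of_tangentAngle
    (fun s ↦ hαv s ▸ hz.hasDerivAt s) hα (by fun_prop) hpos (by simpa using hz.periodic 0) hturn

theorem isoperimetric_deficit_ros_general (L A : ℝ) (hL : 0 < L)
    (γ : ℝ → ℝ × ℝ) (hγ : ContDiff ℝ 2 γ)
    (hper : Function.Periodic γ L)
    (hsimple : Set.InjOn γ (Set.Ico 0 L))
    (hunit : ∀ s : ℝ, ((deriv γ s).1) ^ 2 + ((deriv γ s).2) ^ 2 = 1)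
    (hconvex : ∀ s : ℝ,
      0 < (deriv γ s).1 * (deriv (deriv γ) s).2 - (deriv γ s).2 * (deriv (deriv γ) s).1)
    (hA : A = (1 / 2) *
      ∫ s in (0 : ℝ)..L, ((γ s).1 * (deriv γ s).2 - (γ s).2 * (deriv γ s).1)) :
    (2 / π) * (L ^ 2 - 4 * π * A) ≤
      (∫ s in (0 : ℝ)..L,
          ((deriv γ s).1 * (deriv (deriv γ) s).2 -
            (deriv γ s).2 * (deriv (deriv γ) s).1)⁻¹) - 2 * A := by
  let e := Complex.equivRealProdCLM.symm
  have hdet (p q : ℝ × ℝ) : (conj (e p) * e q).im = p.1 * q.2 - p.2 * q.1 := by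
    simp [e, sub_eq_add_neg]
  have hnorm (s : ℝ) : ‖e (deriv γ s)‖ = 1 := by
    rw [← pow_left_inj₀ (norm_nonneg _) zero_le_one two_ne_zero, ← Complex.normSq_eq_norm_sq,
      Complex.equivRealProdCLM_symm_apply, Complex.normSq_add_mul_I, hunit, one_pow]
  have hγ' : ContDiff ℝ 1 (deriv γ) := hγ.deriv'
  have hz : IsRegularSimpleClosed (e ∘ γ) (e ∘ deriv γ) L :=
    { period_pos := hL
      hasDerivAt s := e.hasFDerivAt.comp_hasDerivAt s
        (hγ.differentiable two_ne_zero s).hasDerivAt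
      continuous_velocity := e.continuous.comp hγ'.continuous
      velocity_ne_zero s := norm_ne_zero_iff.1 ((hnorm s).trans_ne one_ne_zero)
      periodic := hper.comp e
      injOn := e.injective.comp_injOn hsimple }
  have hdeficit := hz.sq_le_integral_inv_curvature (a := e ∘ deriv (deriv γ))
    (fun s ↦ e.hasFDerivAt.comp_hasDerivAt s (hγ'.differentiable one_ne_zero s).hasDerivAt)
    (e.continuous.comp hγ'.continuous_deriv_one) hnorm
    fun s ↦ (hconvex s).trans_eq (hdet _ _).symm
  simp only [Function.comp_apply, hdet] at hdeficit
  have hexpand : 2 / π * (L ^ 2 - 4 * π * A) = 2 / π * L ^ 2 - 8 * A := by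
    field_simp
    ring
  rw [hexpand]
  linarith

/-- Let `C` be a smooth closed convex curve in `ℝ²`, parametrized by
arclength by `γ` with period `L` (its length), simple, with positive curvature
`κ = det(γ', γ'')`, and enclosed (signed) area `A = (1/2)∮ (γ₁ γ₂' − γ₂ γ₁')`.  Then
`(2/π)(L² − 4πA) ≤ ∫_C κ⁻¹ ds − 2A`. -/
theorem isoperimetric_deficit_ros (L A : ℝ) (hL : 0 < L)
    (γ : ℝ → ℝ × ℝ) (hγ : ContDiff ℝ (⊤ : ℕ∞) γ)
    (hper : Function.Periodic γ L)
    (hsimple : Set.InjOn γ (Set.Ico 0 L))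
    (hunit : ∀ s : ℝ, ((deriv γ s).1) ^ 2 + ((deriv γ s).2) ^ 2 = 1)
    (hconvex : ∀ s : ℝ,
      0 < (deriv γ s).1 * (deriv (deriv γ) s).2 - (deriv γ s).2 * (deriv (deriv γ) s).1)
    (hA : A = (1 / 2) *
      ∫ s in (0 : ℝ)..L, ((γ s).1 * (deriv γ s).2 - (γ s).2 * (deriv γ s).1)) :
    (2 / π) * (L ^ 2 - 4 * π * A) ≤
      (∫ s in (0 : ℝ)..L,
          ((deriv γ s).1 * (deriv (deriv γ) s).2 -
            (deriv γ s).2 * (deriv (deriv γ) s).1)⁻¹) - 2 * A :=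
  isoperimetric_deficit_ros_general L A hL γ (contDiff_infty.1 hγ 2) hper hsimple hunit
    hconvex hA
end
end

section
/- Let K be a smooth convex body in ℝ^d with boundary Σ = ∂K a closed convex hypersurface. Then ((d−1)/(d+1)) [ ∫_Σ (H_{d−2})²/H_{d−1} dS − (1/|𝕊^{d−1}|)(∫_Σ H_{d−2} dS)² ] − [ (1/|𝕊^{d−1}|)(∫_Σ H_{d−2} dS)² − ∫_Σ H_{d−3} dS ] ≥ (2(d+2)/(d+1)) [ (1/|𝕊^{d−1}|)(∫_Σ H_{d−2} dS)² − ∫_Σ H_{d−3} dS − ((d+1)/(d−1)) δ₂(K, B(K))² ], where H_k is the normalized k-th mean curvature of Σ, B(K) is the Steiner ball of K, and δ₂ is the L² distance between support functions. -/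
open MeasureTheory Real
open scoped RealInnerProductSpace Pointwise

noncomputable section

/-- The surface (area) measure on the unit sphere `𝕊^{d-1} ⊂ ℝ^d`. -/
def sphMeasure (d : ℕ) : Measure (Metric.sphere (0 : EuclideanSpace ℝ (Fin d)) 1) :=
  (volume : Measure (EuclideanSpace ℝ (Fin d))).toSphere

/-- The degree-zero homogeneous extension of a function on the unit sphere to `ℝ^d`
(extended by `0` at the origin). -/
def ext0 {d : ℕ} (F : Metric.sphere (0 : EuclideanSpace ℝ (Fin d)) 1 → ℝ)
    (x : EuclideanSpace ℝ (Fin d)) : ℝ :=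
  letI := Classical.dec (x = 0)
  if hx : x = 0 then 0
  else F ⟨‖x‖⁻¹ • x, by
    simp [mem_sphere_zero_iff_norm, norm_smul, abs_of_nonneg, inv_mul_cancel₀,
      norm_ne_zero_iff.mpr hx]⟩

/-- The Euclidean Laplacian of `f : ℝ^d → ℝ`. -/
def eucLap {d : ℕ} (f : EuclideanSpace ℝ (Fin d) → ℝ) (x : EuclideanSpace ℝ (Fin d)) : ℝ :=
  ∑ i, fderiv ℝ (fun y => fderiv ℝ f y (EuclideanSpace.single i 1)) x (EuclideanSpace.single i 1)

/-- The Laplace–Beltrami operator (spherical Laplacian) on the unit sphere `𝕊^{d-1}`: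
for `F : 𝕊^{d-1} → ℝ`, `sphLap F` is the restriction to the sphere of the Euclidean
Laplacian of the degree-zero homogeneous extension of `F`.  (This is the standard
characterization of the spherical Laplacian.) -/
def sphLap {d : ℕ} (F : Metric.sphere (0 : EuclideanSpace ℝ (Fin d)) 1 → ℝ) :
    Metric.sphere (0 : EuclideanSpace ℝ (Fin d)) 1 → ℝ :=
  fun θ => eucLap (ext0 F) θ.val

/-- A function on the unit sphere is smooth iff its degree-zero homogeneous extension is
smooth away from the origin. -/
def SphSmooth {d : ℕ} (F : Metric.sphere (0 : EuclideanSpace ℝ (Fin d)) 1 → ℝ) : Prop :=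
  ContDiffOn ℝ (⊤ : ℕ∞) (ext0 F) {(0 : EuclideanSpace ℝ (Fin d))}ᶜ

/-- The support function of a convex body `K ⊆ ℝ^d`, as a (1-homogeneous) function on `ℝ^d`:
`h_K(x) = sup_{y ∈ K} ⟨y, x⟩`. -/
def suppFn {d : ℕ} (K : ConvexBody (EuclideanSpace ℝ (Fin d)))
    (x : EuclideanSpace ℝ (Fin d)) : ℝ :=
  sSup ((fun y => ⟪y, x⟫) '' (K : Set (EuclideanSpace ℝ (Fin d))))

/-- The support function of `K`, restricted to the unit sphere. -/
def suppS {d : ℕ} (K : ConvexBody (EuclideanSpace ℝ (Fin d))) :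
    Metric.sphere (0 : EuclideanSpace ℝ (Fin d)) 1 → ℝ :=
  fun θ => suppFn K θ.val

/-- `K` is a smooth convex body: it has nonempty interior and its support function is
smooth away from the origin (equivalently, its boundary `Σ = ∂K` is a smooth closed
convex hypersurface). -/
def SmoothBody {d : ℕ} (K : ConvexBody (EuclideanSpace ℝ (Fin d))) : Prop :=
  (interior (K : Set (EuclideanSpace ℝ (Fin d)))).Nonempty ∧
    ContDiffOn ℝ (⊤ : ℕ∞) (suppFn K) {(0 : EuclideanSpace ℝ (Fin d))}ᶜ

/-- The area `|𝕊^{d-1}|` of the unit sphere in `ℝ^d`. -/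
def sphArea (d : ℕ) : ℝ := (sphMeasure d Set.univ).toReal

/-- The total (normalized) `(d-2)`-nd mean curvature `∫_Σ H_{d-2} dS` of `Σ = ∂K`,
expressed via the support function: `∫_Σ H_{d-2} dS = ∫_{𝕊^{d-1}} h dθ`. -/
def intH2 {d : ℕ} (K : ConvexBody (EuclideanSpace ℝ (Fin d))) : ℝ :=
  ∫ θ, suppS K θ ∂(sphMeasure d)

/-- The total (normalized) `(d-3)`-rd mean curvature `∫_Σ H_{d-3} dS` of `Σ = ∂K`,
expressed via the support function:
`∫_Σ H_{d-3} dS = (1/(d-1)) ∫_{𝕊^{d-1}} ((d-1) h² + h Δh) dθ`. -/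
def intH3 {d : ℕ} (K : ConvexBody (EuclideanSpace ℝ (Fin d))) : ℝ :=
  (1 / ((d : ℝ) - 1)) *
    ∫ θ, (((d : ℝ) - 1) * (suppS K θ) ^ 2 + suppS K θ * sphLap (suppS K) θ) ∂(sphMeasure d)

/-- The curvature integral `∫_Σ H_{d-2}²/H_{d-1} dS` of `Σ = ∂K`, expressed via the
support function: `H_{d-2}/H_{d-1} = h + Δh/(d-1)` and `dθ = H_{d-1} dS`, so
`∫_Σ H_{d-2}²/H_{d-1} dS = ∫_{𝕊^{d-1}} (h + Δh/(d-1))² dθ`. -/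
def intH2sq {d : ℕ} (K : ConvexBody (EuclideanSpace ℝ (Fin d))) : ℝ :=
  ∫ θ, (suppS K θ + sphLap (suppS K) θ / ((d : ℝ) - 1)) ^ 2 ∂(sphMeasure d)

/-- The Steiner point `z(K) = (1/|𝔹^d|) ∫_{𝕊^{d-1}} h_K(θ) θ dθ`. -/
def steinerPt {d : ℕ} (K : ConvexBody (EuclideanSpace ℝ (Fin d))) :
    EuclideanSpace ℝ (Fin d) :=
  ((volume (Metric.ball (0 : EuclideanSpace ℝ (Fin d)) 1)).toReal)⁻¹ •
    ∫ θ, suppS K θ • (θ : EuclideanSpace ℝ (Fin d)) ∂(sphMeasure d)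

/-- The mean width `w̄(K) = (2/|𝕊^{d-1}|) ∫_{𝕊^{d-1}} h_K dθ`. -/
def meanWidth {d : ℕ} (K : ConvexBody (EuclideanSpace ℝ (Fin d))) : ℝ :=
  (2 / sphArea d) * ∫ θ, suppS K θ ∂(sphMeasure d)

/-- The support function of the Steiner ball `B(K)` of `K` (the ball centered at the
Steiner point `z(K)` with diameter the mean width `w̄(K)`):
`h_{B(K)}(θ) = w̄(K)/2 + z(K)·θ`. -/
def steinerBallSupp {d : ℕ} (K : ConvexBody (EuclideanSpace ℝ (Fin d))) :
    Metric.sphere (0 : EuclideanSpace ℝ (Fin d)) 1 → ℝ :=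
  fun θ => meanWidth K / 2 + ⟪steinerPt K, θ.val⟫

/-- The squared `L²` distance `δ₂(K, B(K))²` between `K` and its Steiner ball. -/
def delta2SqSteiner {d : ℕ} (K : ConvexBody (EuclideanSpace ℝ (Fin d))) : ℝ :=
  ∫ θ, (suppS K θ - steinerBallSupp K θ) ^ 2 ∂(sphMeasure d)

/-- The squared `L²` distance `δ₂(K, L)² = ∫_{𝕊^{d-1}} (h_K - h_L)² dθ`. -/
def delta2Sq {d : ℕ} (K L : ConvexBody (EuclideanSpace ℝ (Fin d))) : ℝ :=
  ∫ θ, (suppS K θ - suppS L θ) ^ 2 ∂(sphMeasure d)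

/-!
Write `h` for the support function of `K` and `Δ` for the spherical Laplacian. All three curvature
integrals are quadratic in `h`, and the mean radius of curvature `h + Δh / (d - 1)` of a ball is
constant because `Δ⟪z, ·⟫ = -(d - 1)⟪z, ·⟫`. Splitting off the ball with the mean width of `K` and
an arbitrary centre leaves `h = h_B + g` with `∫ g = 0`; the contributions of the ball cancel, and
`(d + 1)(d - 1)` times the difference of the two sides becomes `∫ (Δg + 2dg)(Δg + 3(d + 1)g)`.
This is nonnegative since `-2d` and `-3(d + 1)` are consecutive eigenvalues of `Δ`.

Symmetry of `Δ` on the sphere follows from the symmetry of the Euclidean Laplacian on compactly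
supported functions, tested on homogeneous extensions times a radial cutoff. The spectrum is read
off from homogeneous polynomials of degree `n`, on which `Δ + n(n + d - 2)` lowers the degree: `Δ`
is triangular on polynomials, so by Stone–Weierstrass its eigenfunctions span a dense subspace.
-/
open scoped Laplacian Gradient ContDiff

section EuclideanCalculus

variable {E : Type*} [NormedAddCommGroup E] [InnerProductSpace ℝ E]

theorem hasFDerivAt_norm_zpow {x : E} (hx : x ≠ 0) (n : ℤ) :
    HasFDerivAt (fun y : E ↦ ‖y‖ ^ n) ((n * ‖x‖ ^ (n - 2)) • innerSL ℝ x) x := by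
  have hx' : ‖x‖ ≠ 0 := norm_ne_zero_iff.mpr hx
  have hnorm : HasFDerivAt (‖·‖) (‖x‖⁻¹ • innerSL ℝ x) x := by
    have hsqrt := (hasStrictFDerivAt_norm_sq x).hasFDerivAt.sqrt (pow_ne_zero 2 hx')
    simp only [Real.sqrt_sq (norm_nonneg _)] at hsqrt
    convert hsqrt using 1
    module
  have hzpow := (hasDerivAt_zpow n ‖x‖ (.inl hx')).comp_hasFDerivAt x hnorm
  rwa [smul_smul, mul_assoc, ← zpow_sub_one₀ hx', sub_sub] at hzpow

theorem contDiffAt_norm_zpow {x : E} (hx : x ≠ 0) (n : ℤ) {k : WithTop ℕ∞} :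
    ContDiffAt ℝ k (fun y : E ↦ ‖y‖ ^ n) x := by
  have hx' : ‖x‖ ≠ 0 := norm_ne_zero_iff.mpr hx
  obtain ⟨m, rfl | rfl⟩ := n.eq_nat_or_neg
  · simpa only [zpow_natCast] using (contDiffAt_norm ℝ hx).pow m
  · simpa only [zpow_neg, zpow_natCast] using
      ((contDiffAt_norm ℝ hx).pow m).fun_inv (pow_ne_zero m hx')

variable [FiniteDimensional ℝ E] {f g : E → ℝ} {x : E}

theorem laplacian_eq_sum_fderiv_fderiv {ι : Type*} [Fintype ι] (b : OrthonormalBasis ι ℝ E)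
    (hf : ContDiffAt ℝ 2 f x) :
    Δ f x = ∑ i, fderiv ℝ (fun y ↦ fderiv ℝ f y (b i)) x (b i) := by
  have hdf : DifferentiableAt ℝ (fderiv ℝ f) x :=
    (hf.fderiv_right (m := 1) le_rfl).differentiableAt one_ne_zero
  rw [InnerProductSpace.laplacian_eq_iteratedFDeriv_orthonormalBasis f b]
  refine Finset.sum_congr rfl fun i _ ↦ ?_
  rw [iteratedFDeriv_two_apply, fderiv_clm_apply hdf (differentiableAt_const _)]
  simp

theorem contDiffAt_laplacian {k m : WithTop ℕ∞} (hf : ContDiffAt ℝ k f x) (hk : m + 2 ≤ k) :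
    ContDiffAt ℝ m (Δ f) x := by
  rw [InnerProductSpace.laplacian_eq_iteratedFDeriv_stdOrthonormalBasis]
  let b := stdOrthonormalBasis ℝ E
  exact ContDiffAt.sum fun i _ ↦
    (ContinuousMultilinearMap.apply ℝ (fun _ : Fin 2 ↦ E) ℝ ![b i, b i]).contDiff.contDiffAt.comp x
      (hf.iteratedFDeriv_right hk)

theorem laplacian_mul (hf : ContDiffAt ℝ 2 f x) (hg : ContDiffAt ℝ 2 g x) :
    Δ (fun y ↦ f y * g y) x = f x * Δ g x + g x * Δ f x + 2 * ⟪∇ f x, ∇ g x⟫ := by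
  have b := stdOrthonormalBasis ℝ E
  have second_deriv (v : E) : fderiv ℝ (fun y ↦ fderiv ℝ (fun z ↦ f z * g z) y v) x v =
      f x * fderiv ℝ (fun y ↦ fderiv ℝ g y v) x v + g x * fderiv ℝ (fun y ↦ fderiv ℝ f y v) x v +
        2 * (⟪∇ f x, v⟫ * ⟪v, ∇ g x⟫) := by
    have first_deriv : (fun y ↦ fderiv ℝ (fun z ↦ f z * g z) y v) =ᶠ[nhds x]
        fun y ↦ f y * fderiv ℝ g y v + g y * fderiv ℝ f y v := by
      filter_upwards [hf.eventually (by simp), hg.eventually (by simp)] with y hfy hgy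
      simp [fderiv_fun_mul (hfy.differentiableAt two_ne_zero) (hgy.differentiableAt two_ne_zero)]
    have hf₁ := hf.differentiableAt two_ne_zero
    have hg₁ := hg.differentiableAt two_ne_zero
    have hdf := ((hf.fderiv_right (m := 1) le_rfl).differentiableAt one_ne_zero).clm_apply
      (differentiableAt_const v)
    have hdg := ((hg.fderiv_right (m := 1) le_rfl).differentiableAt one_ne_zero).clm_apply
      (differentiableAt_const v)
    rw [first_deriv.fderiv_eq, fderiv_fun_add (hf₁.fun_mul hdg) (hg₁.fun_mul hdf),
      fderiv_fun_mul hf₁ hdg, fderiv_fun_mul hg₁ hdf, real_inner_comm (∇ g x) v,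
      inner_gradient_left, inner_gradient_left]
    simp only [add_apply, smul_apply, smul_eq_mul]
    ring
  rw [laplacian_eq_sum_fderiv_fderiv b (hf.mul hg), laplacian_eq_sum_fderiv_fderiv b hf,
    laplacian_eq_sum_fderiv_fderiv b hg, ← b.sum_inner_mul_inner]
  simp only [second_deriv, Finset.sum_add_distrib, Finset.mul_sum]

theorem gradient_norm_zpow (hx : x ≠ 0) (n : ℤ) :
    ∇ (fun y : E ↦ ‖y‖ ^ n) x = (n * ‖x‖ ^ (n - 2)) • x := by
  refine ext_inner_right ℝ fun v ↦ ?_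
  rw [inner_gradient_left, (hasFDerivAt_norm_zpow hx n).fderiv]
  simp [inner_smul_left]

theorem laplacian_norm_zpow (hx : x ≠ 0) (n : ℤ) :
    Δ (fun y : E ↦ ‖y‖ ^ n) x = n * (n + Module.finrank ℝ E - 2) * ‖x‖ ^ (n - 2) := by
  have hx' : ‖x‖ ≠ 0 := norm_ne_zero_iff.mpr hx
  have b := stdOrthonormalBasis ℝ E
  have second_deriv (i) : fderiv ℝ (fun y ↦ fderiv ℝ (fun z : E ↦ ‖z‖ ^ n) y (b i)) x (b i) =
      n * ‖x‖ ^ (n - 2) + n * (n - 2) * ‖x‖ ^ (n - 4) * (⟪x, b i⟫ * ⟪b i, x⟫) := by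
    have first_deriv : (fun y ↦ fderiv ℝ (fun z : E ↦ ‖z‖ ^ n) y (b i)) =ᶠ[nhds x]
        fun y ↦ n * (‖y‖ ^ (n - 2) * ⟪b i, y⟫) := by
      filter_upwards [isOpen_ne.mem_nhds hx] with y hy
      simp [(hasFDerivAt_norm_zpow hy n).fderiv, real_inner_comm, mul_assoc]
    have hderiv := ((hasFDerivAt_norm_zpow hx (n - 2)).fun_mul
      (innerSL ℝ (b i)).hasFDerivAt).const_mul (n : ℝ)
    simp only [innerSL_apply_apply] at hderiv
    rw [first_deriv.fderiv_eq, hderiv.fderiv, show n - 4 = n - 2 - 2 by ring]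
    simp [real_inner_comm, b.orthonormal.1 i]
    ring
  rw [laplacian_eq_sum_fderiv_fderiv b (contDiffAt_norm_zpow hx n)]
  simp_rw [second_deriv, Finset.sum_add_distrib, ← Finset.mul_sum, b.sum_inner_mul_inner,
    real_inner_self_eq_norm_sq]
  rw [show ‖x‖ ^ (n - 2) = ‖x‖ ^ (n - 4) * ‖x‖ ^ 2 by
    rw [← zpow_natCast, ← zpow_add₀ hx']; ring_nf]
  simp
  ring

theorem laplacian_comp_smul (f : E → ℝ) (c : ℝ) (x : E) :
    Δ (fun y ↦ f (c • y)) x = c ^ 2 * Δ f (c • x) := by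
  have first_deriv : fderiv ℝ (fun y ↦ f (c • y)) = c • fun y ↦ fderiv ℝ f (c • y) :=
    funext fun y ↦ fderiv_comp_smul c
  have second_deriv : fderiv ℝ (fderiv ℝ fun y ↦ f (c • y)) x =
      c • c • fderiv ℝ (fderiv ℝ f) (c • x) := by
    rw [first_deriv, fderiv_const_smul_field (f := fun y ↦ fderiv ℝ f (c • y)), Pi.smul_apply,
      fderiv_comp_smul]
  simp only [InnerProductSpace.laplacian_eq_iteratedFDeriv_stdOrthonormalBasis,
    iteratedFDeriv_two_apply, second_deriv, Finset.mul_sum, smul_apply, smul_eq_mul]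
  exact Finset.sum_congr rfl fun i _ ↦ by ring

end EuclideanCalculus

/-- `f` is positively homogeneous of degree `n`; negative degrees are allowed, and then the value
of `f` at the origin is irrelevant. -/
def PosHomogeneous {E : Type*} [AddCommGroup E] [Module ℝ E] (n : ℤ) (f : E → ℝ) : Prop :=
  ∀ ⦃c : ℝ⦄, 0 < c → ∀ ⦃x⦄, x ≠ 0 → f (c • x) = c ^ n * f x

namespace PosHomogeneous

variable {E : Type*} [NormedAddCommGroup E] [InnerProductSpace ℝ E] {f g : E → ℝ} {m n : ℤ}

theorem const (a : ℝ) : PosHomogeneous 0 fun _ : E ↦ a := fun c _ x _ ↦ by simp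

theorem mul (hf : PosHomogeneous m f) (hg : PosHomogeneous n g) :
    PosHomogeneous (m + n) fun x ↦ f x * g x := fun c hc x hx ↦ by
  simp only [hf hc hx, hg hc hx, zpow_add₀ hc.ne']
  ring

theorem sub (hf : PosHomogeneous n f) (hg : PosHomogeneous n g) :
    PosHomogeneous n fun x ↦ f x - g x := fun c hc x hx ↦ by
  simp only [hf hc hx, hg hc hx, mul_sub]

theorem fderiv_apply_self (hf : PosHomogeneous n f) {x : E} (hx : x ≠ 0)
    (hd : DifferentiableAt ℝ f x) : fderiv ℝ f x x = n * f x := by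
  have along_ray : HasDerivAt (fun c : ℝ ↦ f (c • x)) (fderiv ℝ f x x) 1 := by
    have hd' : HasFDerivAt f (fderiv ℝ f x) ((1 : ℝ) • x) := by simpa using hd.hasFDerivAt
    simpa [Function.comp_def] using hd'.comp_hasDerivAt (1 : ℝ) ((hasDerivAt_id _).smul_const x)
  have power : HasDerivAt (fun c : ℝ ↦ c ^ n * f x) (n * f x) 1 := by
    simpa using (hasDerivAt_zpow n (1 : ℝ) (.inl one_ne_zero)).mul_const (f x)
  refine along_ray.unique (power.congr_of_eventuallyEq ?_)
  filter_upwards [lt_mem_nhds one_pos] with c hc using hf hc hx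

theorem laplacian [FiniteDimensional ℝ E] (hf : PosHomogeneous n f)
    (hs : ContDiffOn ℝ 2 f {0}ᶜ) : PosHomogeneous (n - 2) (Δ f) := fun c hc x hx ↦ by
  have near : (fun y ↦ f (c • y)) =ᶠ[nhds x] c ^ n • f := by
    filter_upwards [isOpen_ne.mem_nhds hx] with y hy using hf hc hy
  have scaling : c ^ 2 * Δ f (c • x) = c ^ n * Δ f x := by
    rw [← laplacian_comp_smul, (InnerProductSpace.laplacian_congr_nhds near).eq_of_nhds,
      InnerProductSpace.laplacian_smul _ (hs.contDiffAt (isOpen_ne.mem_nhds hx)), smul_eq_mul]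
  rw [zpow_sub₀ hc.ne', div_mul_eq_mul_div, eq_div_iff (zpow_ne_zero 2 hc.ne'), ← scaling, mul_comm]
  rfl

end PosHomogeneous

section Sphere

variable {d : ℕ}

local notation "𝔼[" d "]" => EuclideanSpace ℝ (Fin d)
local notation "𝕊[" d "]" => Metric.sphere (0 : EuclideanSpace ℝ (Fin d)) 1

variable {F G : 𝕊[d] → ℝ} {f : 𝔼[d] → ℝ} {n : ℤ}

theorem ext0_apply_coe (F : 𝕊[d] → ℝ) (θ : 𝕊[d]) : ext0 F θ = F θ := by
  have hθ : (θ : 𝔼[d]) ≠ 0 := ne_zero_of_mem_unit_sphere θ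
  simp [ext0, hθ]

theorem ext0_add (F G : 𝕊[d] → ℝ) : ext0 (F + G) = ext0 F + ext0 G := by
  ext x
  by_cases hx : x = 0 <;> simp [ext0, hx]

theorem ext0_smul (c : ℝ) (F : 𝕊[d] → ℝ) : ext0 (c • F) = c • ext0 F := by
  ext x
  by_cases hx : x = 0 <;> simp [ext0, hx]

theorem posHomogeneous_ext0 (F : 𝕊[d] → ℝ) : PosHomogeneous 0 (ext0 F) := fun c hc x hx ↦ by
  simp [ext0, hx, hc.ne', norm_smul, abs_of_pos hc, smul_smul, mul_comm]

theorem PosHomogeneous.ext0_restrict (hf : PosHomogeneous n f) {x : 𝔼[d]} (hx : x ≠ 0) :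
    ext0 (fun θ : 𝕊[d] ↦ f θ) x = ‖x‖ ^ (-n) * f x := by
  simp only [ext0, hx, dite_false]
  rw [hf (inv_pos.mpr (norm_pos_iff.mpr hx)) hx, inv_zpow']

namespace SphSmooth

theorem contDiffAt_ext0 (hF : SphSmooth F) {x : 𝔼[d]} (hx : x ≠ 0) :
    ContDiffAt ℝ 2 (ext0 F) x :=
  (ContDiffOn.contDiffAt hF (isOpen_ne.mem_nhds hx)).of_le ENat.LEInfty.out

theorem continuous (hF : SphSmooth F) : Continuous F := by
  have hcont : Continuous fun θ : 𝕊[d] ↦ ext0 F θ :=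
    hF.continuousOn.comp_continuous continuous_subtype_val fun θ ↦ ne_zero_of_mem_unit_sphere θ
  simpa only [ext0_apply_coe] using hcont

theorem add (hF : SphSmooth F) (hG : SphSmooth G) : SphSmooth (F + G) := by
  rw [SphSmooth, ext0_add]
  exact ContDiffOn.add hF hG

theorem smul (c : ℝ) (hF : SphSmooth F) : SphSmooth (c • F) := by
  rw [SphSmooth, ext0_smul]
  exact contDiffOn_const.smul hF

end SphSmooth

theorem PosHomogeneous.sphSmooth_restrict (hf : PosHomogeneous n f)
    (hs : ContDiffOn ℝ (⊤ : ℕ∞) f {0}ᶜ) : SphSmooth fun θ : 𝕊[d] ↦ f θ := by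
  have hnorm : ContDiffOn ℝ (⊤ : ℕ∞) (fun x : 𝔼[d] ↦ ‖x‖ ^ (-n)) {0}ᶜ :=
    fun x hx ↦ (contDiffAt_norm_zpow hx _).contDiffWithinAt
  exact (hnorm.mul hs).congr fun x hx ↦ hf.ext0_restrict hx

theorem sphSmooth_const (c : ℝ) : SphSmooth fun _ : 𝕊[d] ↦ c :=
  (PosHomogeneous.const c).sphSmooth_restrict contDiffOn_const

theorem SphSmooth.sphLap_eq_laplacian (hF : SphSmooth F) (θ : 𝕊[d]) :
    sphLap F θ = Δ (ext0 F) (θ : 𝔼[d]) := by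
  rw [laplacian_eq_sum_fderiv_fderiv (EuclideanSpace.basisFun (Fin d) ℝ)
    (hF.contDiffAt_ext0 (ne_zero_of_mem_unit_sphere θ))]
  simp [sphLap, eucLap]

theorem PosHomogeneous.sphLap_restrict (hf : PosHomogeneous n f)
    (hs : ContDiffOn ℝ (⊤ : ℕ∞) f {0}ᶜ) (θ : 𝕊[d]) :
    sphLap (fun η : 𝕊[d] ↦ f η) θ = Δ f (θ : 𝔼[d]) - n * (n + d - 2) * f θ := by
  have hθ : (θ : 𝔼[d]) ≠ 0 := ne_zero_of_mem_unit_sphere θ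
  have near : ext0 (fun η : 𝕊[d] ↦ f η) =ᶠ[nhds (θ : 𝔼[d])] fun x ↦ ‖x‖ ^ (-n) * f x := by
    filter_upwards [isOpen_ne.mem_nhds hθ] with x hx using hf.ext0_restrict hx
  have hf₂ : ContDiffAt ℝ 2 f (θ : 𝔼[d]) :=
    (hs.contDiffAt (isOpen_ne.mem_nhds hθ)).of_le ENat.LEInfty.out
  have euler : ⟪(θ : 𝔼[d]), ∇ f θ⟫ = n * f θ := by
    rw [real_inner_comm, inner_gradient_left,
      hf.fderiv_apply_self hθ (hf₂.differentiableAt two_ne_zero)]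
  rw [(hf.sphSmooth_restrict hs).sphLap_eq_laplacian,
    (InnerProductSpace.laplacian_congr_nhds near).eq_of_nhds,
    laplacian_mul (contDiffAt_norm_zpow hθ _) hf₂, laplacian_norm_zpow hθ, gradient_norm_zpow hθ,
    inner_smul_left, euler]
  simp
  ring

theorem sphLap_const (c : ℝ) : sphLap (fun _ : 𝕊[d] ↦ c) = 0 := by
  ext θ
  simp [(PosHomogeneous.const c).sphLap_restrict contDiffOn_const]

theorem SphSmooth.sphLap (hF : SphSmooth F) : SphSmooth (sphLap F) := by
  have hΔ : ContDiffOn ℝ (⊤ : ℕ∞) (Δ (ext0 F)) {0}ᶜ := fun x hx ↦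
    (contDiffAt_laplacian (hF.contDiffAt (isOpen_ne.mem_nhds hx)) le_rfl).contDiffWithinAt
  rw [funext hF.sphLap_eq_laplacian]
  exact ((posHomogeneous_ext0 F).laplacian (hF.of_le ENat.LEInfty.out)).sphSmooth_restrict hΔ

theorem sphLap_add (hF : SphSmooth F) (hG : SphSmooth G) :
    sphLap (F + G) = sphLap F + sphLap G := by
  ext θ
  have hθ : (θ : 𝔼[d]) ≠ 0 := ne_zero_of_mem_unit_sphere θ
  rw [(hF.add hG).sphLap_eq_laplacian, ext0_add,
    (hF.contDiffAt_ext0 hθ).laplacian_add (hG.contDiffAt_ext0 hθ), Pi.add_apply,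
    hF.sphLap_eq_laplacian, hG.sphLap_eq_laplacian]

theorem sphLap_smul (c : ℝ) (hF : SphSmooth F) : sphLap (c • F) = c • sphLap F := by
  ext θ
  rw [(hF.smul c).sphLap_eq_laplacian, ext0_smul, InnerProductSpace.laplacian_smul _
    (hF.contDiffAt_ext0 (ne_zero_of_mem_unit_sphere θ)), Pi.smul_apply, hF.sphLap_eq_laplacian]

end Sphere

section RadialBump

/-- The profile of `radialBump` as a function of the squared norm. -/
def radialProfile : ContDiffBump (1 : ℝ) where
  rIn := 1 / 4
  rOut := 1 / 2
  rIn_pos := by norm_num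
  rIn_lt_rOut := by norm_num

variable {E : Type*} [NormedAddCommGroup E]

/-- A smooth function of the norm supported in an annulus around the unit sphere: it cuts functions
which are smooth off the origin down to test functions. -/
def radialBump (x : E) : ℝ := radialProfile (‖x‖ ^ 2)

theorem radialBump_eq_zero_of_norm_sq_lt {x : E} (hx : ‖x‖ ^ 2 < 1 / 2) : radialBump x = 0 := by
  refine ContDiffBump.zero_of_le_dist _ ?_
  rw [dist_comm, Real.dist_eq]
  exact le_trans (by norm_num [radialProfile]; linarith) (le_abs_self _)

theorem radialBump_eq_zero_of_lt_norm_sq {x : E} (hx : 3 / 2 < ‖x‖ ^ 2) : radialBump x = 0 := by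
  refine ContDiffBump.zero_of_le_dist _ ?_
  rw [Real.dist_eq]
  exact le_trans (by norm_num [radialProfile]; linarith) (le_abs_self _)

theorem radialBump_eq_one_of_norm_eq_one {x : E} (hx : ‖x‖ = 1) : radialBump x = 1 :=
  ContDiffBump.one_of_mem_closedBall _ (by simp [hx, radialProfile.rIn_pos.le])

variable [InnerProductSpace ℝ E]

theorem contDiff_radialBump {k : ℕ∞} : ContDiff ℝ k (radialBump : E → ℝ) :=
  (ContDiffBump.contDiff _).comp (contDiff_norm_sq ℝ)

theorem hasCompactSupport_radialBump [FiniteDimensional ℝ E] :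
    HasCompactSupport (radialBump : E → ℝ) := by
  refine .intro (isCompact_closedBall (0 : E) 2) fun x hx ↦ radialBump_eq_zero_of_lt_norm_sq ?_
  have : 2 < ‖x‖ := by simpa using hx
  nlinarith

theorem contDiff_radialBump_mul {k : ℕ∞} {f : E → ℝ} (hf : ContDiffOn ℝ k f {0}ᶜ) :
    ContDiff ℝ k fun x ↦ radialBump x * f x := by
  refine contDiff_iff_contDiffAt.mpr fun x ↦ ?_
  rcases eq_or_ne x 0 with rfl | hx
  · have near : (fun y : E ↦ radialBump y * f y) =ᶠ[nhds 0] fun _ ↦ 0 := by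
      have hball : {y : E | ‖y‖ ^ 2 < 1 / 2} ∈ nhds 0 :=
        (isOpen_lt (by fun_prop) continuous_const).mem_nhds (by simp)
      filter_upwards [hball] with y hy
      rw [radialBump_eq_zero_of_norm_sq_lt hy, zero_mul]
    exact contDiffAt_const.congr_of_eventuallyEq near
  · exact contDiff_radialBump.contDiffAt.mul (hf.contDiffAt (isOpen_ne.mem_nhds hx))

theorem inner_gradient_radialBump_of_orthogonal [CompleteSpace E] {x v : E} (hv : ⟪x, v⟫ = 0) :
    ⟪∇ radialBump x, v⟫ = 0 := by
  have hderiv : HasFDerivAt (radialBump : E → ℝ)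
      (deriv radialProfile (‖x‖ ^ 2) • (2 : ℕ) • innerSL ℝ x) x :=
    (radialProfile.contDiff.differentiable one_ne_zero _).hasDerivAt.comp_hasFDerivAt x
      (hasStrictFDerivAt_norm_sq x).hasFDerivAt
  rw [inner_gradient_left, hderiv.fderiv]
  simp [hv]

end RadialBump

section Polar

open Measure Module

variable {E : Type*} [NormedAddCommGroup E] [InnerProductSpace ℝ E] [FiniteDimensional ℝ E]
  {f g : E → ℝ} {n : ℤ}

theorem radialBump_mul_laplacian_sub (hf : PosHomogeneous n f) (hg : PosHomogeneous n g) {x : E}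
    (hx : x ≠ 0) (hf₂ : ContDiffAt ℝ 2 f x) (hg₂ : ContDiffAt ℝ 2 g x) :
    radialBump x * f x * Δ (fun y ↦ radialBump y * g y) x -
      Δ (fun y ↦ radialBump y * f y) x * (radialBump x * g x) =
        radialBump x ^ 2 * (f x * Δ g x - g x * Δ f x) := by
  have tangential : ⟪x, f x • ∇ g x - g x • ∇ f x⟫ = 0 := by
    rw [real_inner_comm, inner_sub_left, inner_smul_left, inner_smul_left, inner_gradient_left,
      inner_gradient_left, hf.fderiv_apply_self hx (hf₂.differentiableAt two_ne_zero),
      hg.fderiv_apply_self hx (hg₂.differentiableAt two_ne_zero)]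
    simp only [conj_trivial]
    ring
  have hcross := inner_gradient_radialBump_of_orthogonal tangential
  rw [inner_sub_right, inner_smul_right, inner_smul_right] at hcross
  have hbump : ContDiffAt ℝ 2 radialBump x := (contDiff_radialBump (k := 2)).contDiffAt
  rw [laplacian_mul hbump hf₂, laplacian_mul hbump hg₂]
  linear_combination 2 * radialBump x * hcross

variable [MeasurableSpace E] [BorelSpace E] (μ : Measure E) [μ.IsAddHaarMeasure]

theorem integral_fun_norm_mul_posHomogeneous [Nontrivial E] (φ : ℝ → ℝ) (hf : PosHomogeneous n f) :
    ∫ x, φ ‖x‖ * f x ∂μ = (∫ θ : Metric.sphere (0 : E) 1, f θ ∂μ.toSphere) *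
      ∫ r : Set.Ioi (0 : ℝ), φ r * (r : ℝ) ^ n ∂volumeIoiPow (finrank ℝ E - 1) := by
  have hpolar (x : ({0}ᶜ : Set E)) : φ ‖(x : E)‖ * f x = f (homeomorphUnitSphereProd E x).1 *
      (φ (homeomorphUnitSphereProd E x).2 * ((homeomorphUnitSphereProd E x).2 : ℝ) ^ n) := by
    have hx : 0 < ‖(x : E)‖ := norm_pos_iff.mpr x.2
    simp only [homeomorphUnitSphereProd_apply_fst_coe, homeomorphUnitSphereProd_apply_snd_coe,
      hf (inv_pos.mpr hx) x.2, inv_zpow]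
    field_simp
  calc ∫ x, φ ‖x‖ * f x ∂μ
      = ∫ x : ({0}ᶜ : Set E), φ ‖(x : E)‖ * f x ∂μ.comap (↑) := by
        rw [integral_subtype_comap (measurableSet_singleton _).compl fun x ↦ φ ‖x‖ * f x,
          restrict_compl_singleton]
    _ = ∫ p : Metric.sphere (0 : E) 1 × Set.Ioi (0 : ℝ), f p.1 * (φ p.2 * (p.2 : ℝ) ^ n)
          ∂μ.toSphere.prod (volumeIoiPow (finrank ℝ E - 1)) := by
        simp_rw [hpolar]
        exact μ.measurePreserving_homeomorphUnitSphereProd.integral_comp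
          (Homeomorph.measurableEmbedding _)
          fun p ↦ f p.1 * (φ p.2 * (p.2 : ℝ) ^ n)
    _ = _ := integral_prod_mul (fun θ : Metric.sphere (0 : E) 1 ↦ f θ)
          fun r : Set.Ioi (0 : ℝ) ↦ φ r * (r : ℝ) ^ n

/-- The cutoff is squared because Green's identity applied to two cut off functions produces
its square. -/
theorem integral_sphere_eq_zero_of_radialBump (hf : PosHomogeneous n f)
    (h : ∫ x, radialBump x ^ 2 * f x ∂μ = 0) :
    ∫ θ : Metric.sphere (0 : E) 1, f θ ∂μ.toSphere = 0 := by
  cases subsingleton_or_nontrivial E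
  · exact integral_of_isEmpty
  have hnorm : PosHomogeneous n fun x : E ↦ ‖x‖ ^ n := fun c hc x _ ↦ by
    beta_reduce
    rw [norm_smul, Real.norm_of_nonneg hc.le, mul_zpow]
  have hpos : 0 < ∫ x : E, radialBump x ^ 2 * ‖x‖ ^ n ∂μ := by
    have hcont : Continuous fun x : E ↦ radialBump x * (radialBump x * ‖x‖ ^ n) :=
      (contDiff_radialBump (k := 0)).continuous.mul (contDiff_radialBump_mul (k := 0)
        fun x hx ↦ (contDiffAt_norm_zpow hx n).contDiffWithinAt).continuous
    simp only [← mul_assoc, ← sq] at hcont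
    obtain ⟨e, he⟩ := exists_norm_eq E zero_le_one
    refine hcont.integral_pos_of_hasCompactSupport_nonneg_nonzero ?_ (fun x ↦ by positivity)
      (x := e) (by simp [radialBump_eq_one_of_norm_eq_one he, he])
    simp only [sq, mul_assoc]
    exact hasCompactSupport_radialBump.mul_right
  have hradial := integral_fun_norm_mul_posHomogeneous μ (fun r ↦ radialProfile (r ^ 2) ^ 2) hnorm
  have hzero := integral_fun_norm_mul_posHomogeneous μ (fun r ↦ radialProfile (r ^ 2) ^ 2) hf
  exact (mul_eq_zero.mp (hzero.symm.trans h)).resolve_right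
    (right_ne_zero_of_mul (hradial.symm.trans_ne hpos.ne'))

theorem integral_sphere_mul_laplacian_sub (hf : PosHomogeneous n f) (hg : PosHomogeneous n g)
    (hfs : ContDiffOn ℝ ∞ f {0}ᶜ) (hgs : ContDiffOn ℝ ∞ g {0}ᶜ) :
    ∫ θ : Metric.sphere (0 : E) 1, (f θ * Δ g θ - g θ * Δ f θ) ∂μ.toSphere = 0 := by
  have hf₂ : ContDiffOn ℝ 2 f {0}ᶜ := hfs.of_le ENat.LEInfty.out
  have hg₂ : ContDiffOn ℝ 2 g {0}ᶜ := hgs.of_le ENat.LEInfty.out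
  let u : SchwartzMap E ℝ :=
    hasCompactSupport_radialBump.mul_right.toSchwartzMap (contDiff_radialBump_mul hfs)
  let v : SchwartzMap E ℝ :=
    hasCompactSupport_radialBump.mul_right.toSchwartzMap (contDiff_radialBump_mul hgs)
  have hintegrable (a b : SchwartzMap E ℝ) (ha : HasCompactSupport a) :
      Integrable (fun x ↦ a x * b x) μ :=
    (a.continuous.mul b.continuous).integrable_of_hasCompactSupport ha.mul_right
  have green : ∫ x, (u x * Δ v x - Δ u x * v x) ∂μ = 0 := by
    rw [integral_sub (hintegrable u (Δ v) hasCompactSupport_radialBump.mul_right),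
      u.integral_mul_laplacian_right_eq_left, sub_self]
    simpa only [mul_comm] using hintegrable v (Δ u) hasCompactSupport_radialBump.mul_right
  refine integral_sphere_eq_zero_of_radialBump μ ((hf.mul (hg.laplacian hg₂)).sub
    (hg.mul (hf.laplacian hf₂))) (green ▸ integral_congr_ae (.of_forall fun x ↦ ?_))
  rcases eq_or_ne x 0 with rfl | hx
  · simp [u, v, radialBump_eq_zero_of_norm_sq_lt (x := (0 : E))]
  · have hx' := isOpen_ne.mem_nhds hx
    simp only [SchwartzMap.laplacian_apply]
    exact (radialBump_mul_laplacian_sub hf hg hx (hf₂.contDiffAt hx') (hg₂.contDiffAt hx')).symm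

end Polar

section Symmetry

variable {d : ℕ}

local notation "𝔼[" d "]" => EuclideanSpace ℝ (Fin d)
local notation "𝕊[" d "]" => Metric.sphere (0 : EuclideanSpace ℝ (Fin d)) 1

variable {F G : 𝕊[d] → ℝ}

instance (d : ℕ) : IsFiniteMeasure (sphMeasure d) :=
  inferInstanceAs (IsFiniteMeasure (Measure.toSphere _))

theorem integrable_sphMeasure_of_continuous (hF : Continuous F) : Integrable F (sphMeasure d) :=
  hF.integrable_of_hasCompactSupport (HasCompactSupport.of_compactSpace F)

theorem integral_mul_sphLap (hF : SphSmooth F) (hG : SphSmooth G) :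
    ∫ θ, F θ * sphLap G θ ∂(sphMeasure d) = ∫ θ, sphLap F θ * G θ ∂(sphMeasure d) := by
  have green := integral_sphere_mul_laplacian_sub volume (posHomogeneous_ext0 F)
    (posHomogeneous_ext0 G) hF hG
  simp only [ext0_apply_coe, ← hF.sphLap_eq_laplacian, ← hG.sphLap_eq_laplacian,
    mul_comm (G _)] at green
  rwa [integral_sub, sub_eq_zero] at green
  · exact integrable_sphMeasure_of_continuous (hF.continuous.mul hG.sphLap.continuous)
  · exact integrable_sphMeasure_of_continuous (hF.sphLap.continuous.mul hG.continuous)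

theorem integral_sphLap (hF : SphSmooth F) : ∫ θ, sphLap F θ ∂(sphMeasure d) = 0 := by
  simpa [sphLap_const] using (integral_mul_sphLap hF (sphSmooth_const 1)).symm

end Symmetry

section TriangularEndomorphism

variable {K M : Type*} [Field K] [AddCommGroup M] [Module K M] {f : Module.End K M}
  {V : ℕ → Submodule K M} {μ : ℕ → K}

theorem biSup_eigenspace_le_map_sub_smul {ι : Type*} {s : Set ι} {ν : ι → K} {a : K}
    (ha : ∀ i ∈ s, ν i ≠ a) :
    ⨆ i ∈ s, f.eigenspace (ν i) ≤ (⨆ i ∈ s, f.eigenspace (ν i)).map (f - a • LinearMap.id) := by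
  refine iSup₂_le fun i hi x hx ↦ ⟨(ν i - a)⁻¹ • x,
    Submodule.smul_mem _ _ (le_biSup (fun i ↦ f.eigenspace (ν i)) hi hx), ?_⟩
  have hne : ν i - a ≠ 0 := sub_ne_zero.mpr (ha i hi)
  simp [Module.End.mem_eigenspace_iff.mp hx, ← sub_smul, smul_smul, hne]

theorem le_iSup_eigenspace_of_sub_smul_mem (hμ : Function.Injective μ)
    (h : ∀ n, ∀ v ∈ V n, f v - μ n • v ∈ ⨆ k < n, V k) (n : ℕ) :
    V n ≤ ⨆ k ≤ n, f.eigenspace (μ k) := by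
  induction n using Nat.strong_induction_on with
  | _ n ih =>
  intro v hv
  have lower : ⨆ k < n, V k ≤ ⨆ k < n, f.eigenspace (μ k) := iSup₂_le fun k hk ↦
    (ih k hk).trans (biSup_mono fun j hj ↦ hj.trans_lt hk)
  have solvable : ⨆ k < n, f.eigenspace (μ k) ≤
      (⨆ k < n, f.eigenspace (μ k)).map (f - μ n • LinearMap.id) :=
    biSup_eigenspace_le_map_sub_smul (s := Set.Iio n) fun k hk ↦ hμ.ne (ne_of_lt hk)
  obtain ⟨u, hu, hfu⟩ := solvable (lower (h n v hv))
  have eigen : v - u ∈ f.eigenspace (μ n) := by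
    simp only [LinearMap.sub_apply, LinearMap.smul_apply, LinearMap.id_apply] at hfu
    rw [Module.End.mem_eigenspace_iff, map_sub, smul_sub, sub_eq_sub_iff_sub_eq_sub, hfu]
  have lower_le : ⨆ k < n, f.eigenspace (μ k) ≤ ⨆ k ≤ n, f.eigenspace (μ k) :=
    biSup_mono fun k hk ↦ hk.le
  rw [← sub_add_cancel v u]
  exact Submodule.add_mem _ (Submodule.mem_iSup_of_mem n (Submodule.mem_iSup_of_mem le_rfl eigen))
    (lower_le hu)

end TriangularEndomorphism

section OrthogonalDecomposition

variable {ι H : Type*} [NormedAddCommGroup H] [InnerProductSpace ℝ H] [CompleteSpace H]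

theorem inner_isHilbertSum_apply {G : ι → Type*} [∀ i, NormedAddCommGroup (G i)]
    [∀ i, InnerProductSpace ℝ (G i)] {V : ∀ i, G i →ₗᵢ[ℝ] H} (hV : IsHilbertSum ℝ G V) (i : ι)
    (e : G i) (x : H) : ⟪V i e, x⟫ = ⟪e, hV.linearIsometryEquiv x i⟫ := by
  classical
  rw [← lp.inner_single_left, ← hV.linearIsometryEquiv_symm_apply_single,
    LinearIsometryEquiv.inner_map_eq_flip, LinearIsometryEquiv.symm_symm]

theorem inner_nonneg_of_isHilbertSum {G : ι → Type*} [∀ i, NormedAddCommGroup (G i)]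
    [∀ i, InnerProductSpace ℝ (G i)] {V : ∀ i, G i →ₗᵢ[ℝ] H} (hV : IsHilbertSum ℝ G V)
    {a b : ι → ℝ} {x y z : H} (hab : ∀ i, 0 ≤ a i * b i)
    (hy : ∀ i e, ⟪V i e, y⟫ = a i * ⟪V i e, x⟫)
    (hz : ∀ i e, ⟪V i e, z⟫ = b i * ⟪V i e, x⟫) : 0 ≤ ⟪y, z⟫ := by
  have coord {c : ι → ℝ} {w : H} (hw : ∀ i e, ⟪V i e, w⟫ = c i * ⟪V i e, x⟫) (i : ι) :
      hV.linearIsometryEquiv w i = c i • hV.linearIsometryEquiv x i := by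
    refine ext_inner_left ℝ fun e ↦ ?_
    rw [inner_smul_right, ← inner_isHilbertSum_apply, ← inner_isHilbertSum_apply, hw]
  rw [← hV.linearIsometryEquiv.inner_map_map]
  refine (lp.hasSum_inner _ _).nonneg fun i ↦ ?_
  rw [coord hy, coord hz, inner_smul_left, inner_smul_right, ← mul_assoc]
  exact mul_nonneg (hab i) real_inner_self_nonneg

theorem inner_nonneg_of_iSup_dense {E : ι → Submodule ℝ H} (horth : Pairwise fun i j ↦ E i ⟂ E j)
    (hdense : (⨆ i, E i).topologicalClosure = ⊤) {a b : ι → ℝ} {x y z : H}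
    (hab : ∀ i, 0 ≤ a i * b i) (hy : ∀ i, y - a i • x ∈ (E i)ᗮ) (hz : ∀ i, z - b i • x ∈ (E i)ᗮ) :
    0 ≤ ⟪y, z⟫ := by
  have horth' : Pairwise fun i j ↦ (E i).topologicalClosure ⟂ (E j).topologicalClosure :=
    fun i j hij ↦ Submodule.isOrtho_iff_le.mpr <| by
      rw [Submodule.orthogonal_closure]
      exact (E i).topologicalClosure_minimal (horth hij).le (E j).isClosed_orthogonal
  have hsum := IsHilbertSum.mkInternal (fun i ↦ (E i).topologicalClosure)
    (.of_pairwise horth') (hdense.ge.trans (Submodule.topologicalClosure_mono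
      (iSup_mono fun i ↦ (E i).le_topologicalClosure)))
  have inner_eq {c : ℝ} {w : H} {i : ι} (hw : w - c • x ∈ (E i)ᗮ)
      (e : (E i).topologicalClosure) : ⟪(e : H), w⟫ = c * ⟪(e : H), x⟫ := by
    rw [← (E i).orthogonal_closure] at hw
    simpa [inner_sub_right, inner_smul_right, sub_eq_zero] using hw e e.2
  exact inner_nonneg_of_isHilbertSum hsum hab (fun i ↦ inner_eq (hy i)) fun i ↦ inner_eq (hz i)

end OrthogonalDecomposition

section Polynomials

variable {E : Type*} [NormedAddCommGroup E] [InnerProductSpace ℝ E] {f : E → ℝ} {n : ℕ}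

variable (E) in
/-- The homogeneous polynomial functions of degree `n` on `E`, as the span of the products of
`n` linear functionals `⟪v, ·⟫`. -/
def homogeneousPolynomials (n : ℕ) : Submodule ℝ (E → ℝ) :=
  LinearMap.range (LinearMap.ltoFun ℝ E ℝ ℝ ∘ₗ innerₗ E) ^ n

theorem inner_mem_homogeneousPolynomials (v : E) :
    (fun x ↦ ⟪v, x⟫) ∈ homogeneousPolynomials E 1 := by
  rw [homogeneousPolynomials, pow_one]
  exact ⟨v, rfl⟩

theorem mul_mem_homogeneousPolynomials {m : ℕ} {g : E → ℝ} (hf : f ∈ homogeneousPolynomials E m)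
    (hg : g ∈ homogeneousPolynomials E n) : f * g ∈ homogeneousPolynomials E (m + n) := by
  rw [homogeneousPolynomials, pow_add]
  exact Submodule.mul_mem_mul hf hg

theorem exists_eq_const_of_mem_homogeneousPolynomials_zero
    (hf : f ∈ homogeneousPolynomials E 0) : ∃ c, f = fun _ ↦ c := by
  rw [homogeneousPolynomials, pow_zero, Submodule.mem_one] at hf
  exact hf.imp fun _ h ↦ h.symm

theorem exists_eq_inner_of_mem_homogeneousPolynomials_one
    (hf : f ∈ homogeneousPolynomials E 1) : ∃ v, f = fun x ↦ ⟪v, x⟫ := by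
  rw [homogeneousPolynomials, pow_one] at hf
  exact hf.imp fun _ h ↦ h.symm

theorem homogeneousPolynomials_induction {C : ℕ → (E → ℝ) → Prop}
    (const : ∀ c : ℝ, C 0 fun _ ↦ c)
    (add : ∀ n, ∀ f ∈ homogeneousPolynomials E n, ∀ g ∈ homogeneousPolynomials E n,
      C n f → C n g → C n (f + g))
    (inner_mul : ∀ n v, ∀ f ∈ homogeneousPolynomials E n, C n f → C (n + 1) fun x ↦ ⟪v, x⟫ * f x)
    (hf : f ∈ homogeneousPolynomials E n) : C n f := by
  refine Submodule.pow_induction_on_left' (C := fun n f _ ↦ C n f) _ const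
    (fun f g n hf hg ↦ add n f hf g hg) ?_ hf
  rintro _ ⟨v, rfl⟩ n f hf
  exact inner_mul n v f hf

theorem contDiff_of_mem_homogeneousPolynomials {k : WithTop ℕ∞}
    (hf : f ∈ homogeneousPolynomials E n) : ContDiff ℝ k f :=
  homogeneousPolynomials_induction (C := fun _ f ↦ ContDiff ℝ k f) (fun _ ↦ contDiff_const)
    (fun _ _ _ _ _ ↦ ContDiff.add) (fun _ v _ _ ↦ (innerSL ℝ v).contDiff.mul) hf

theorem posHomogeneous_of_mem_homogeneousPolynomials (hf : f ∈ homogeneousPolynomials E n) :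
    PosHomogeneous n f := by
  refine homogeneousPolynomials_induction (C := fun n f ↦ PosHomogeneous n f) ?_ ?_ ?_ hf
  · exact PosHomogeneous.const
  · intro n f _ g _ hf hg c hc x hx
    simp [hf hc hx, hg hc hx, mul_add]
  · intro n v f _ hf c hc x hx
    simp only [hf hc hx, inner_smul_right, zpow_natCast, pow_succ]
    ring

theorem fderiv_apply_mem_homogeneousPolynomials (hf : f ∈ homogeneousPolynomials E (n + 1))
    (v : E) : (fun x ↦ fderiv ℝ f x v) ∈ homogeneousPolynomials E n := by
  have differentiable {m : ℕ} {g : E → ℝ} (hg : g ∈ homogeneousPolynomials E m) (x : E) :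
      DifferentiableAt ℝ g x :=
    (contDiff_of_mem_homogeneousPolynomials (k := 1) hg).differentiable one_ne_zero x
  refine homogeneousPolynomials_induction (C := fun m f ↦ ∀ n, m = n + 1 →
    (fun x ↦ fderiv ℝ f x v) ∈ homogeneousPolynomials E n) ?_ ?_ ?_ hf n rfl
  · intro c n hn
    omega
  · intro m f hf g hg ihf ihg n hn
    convert Submodule.add_mem _ (ihf n hn) (ihg n hn) using 1
    ext x
    simp [fderiv_add (differentiable hf x) (differentiable hg x)]
  · intro m w f hf ih n hn
    obtain rfl : m = n := by omega
    have product_rule : (fun x ↦ fderiv ℝ (fun y ↦ ⟪w, y⟫ * f y) x v) =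
        (⟪w, v⟫ • f) + (fun x ↦ ⟪w, x⟫) * fun x ↦ fderiv ℝ f x v := by
      ext x
      have hmul := (innerSL ℝ w).hasFDerivAt.fun_mul (differentiable hf x).hasFDerivAt
      simp only [innerSL_apply_apply] at hmul
      simp [hmul.fderiv]
      ring
    rw [product_rule]
    refine Submodule.add_mem _ (Submodule.smul_mem _ _ hf) ?_
    cases m with
    | zero =>
      obtain ⟨c, rfl⟩ := exists_eq_const_of_mem_homogeneousPolynomials_zero hf
      convert Submodule.zero_mem _
      ext x
      simp
    | succ m =>
      rw [add_comm]
      exact mul_mem_homogeneousPolynomials (inner_mem_homogeneousPolynomials w) (ih m rfl)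

variable [FiniteDimensional ℝ E]

theorem laplacian_mem_homogeneousPolynomials (hf : f ∈ homogeneousPolynomials E (n + 2)) :
    Δ f ∈ homogeneousPolynomials E n := by
  let b := stdOrthonormalBasis ℝ E
  have sum_eq : Δ f = ∑ i, fun x ↦ fderiv ℝ (fun y ↦ fderiv ℝ f y (b i)) x (b i) := by
    ext x
    rw [laplacian_eq_sum_fderiv_fderiv b (contDiff_of_mem_homogeneousPolynomials hf).contDiffAt,
      Finset.sum_apply]
  rw [sum_eq]
  exact Submodule.sum_mem _ fun i _ ↦ fderiv_apply_mem_homogeneousPolynomials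
    (fderiv_apply_mem_homogeneousPolynomials hf _) _

theorem laplacian_eq_zero_of_mem_homogeneousPolynomials (hf : f ∈ homogeneousPolynomials E n)
    (hn : n < 2) : Δ f = 0 := by
  interval_cases n
  · obtain ⟨c, rfl⟩ := exists_eq_const_of_mem_homogeneousPolynomials_zero hf
    exact InnerProductSpace.laplacian_const
  · obtain ⟨v, rfl⟩ := exists_eq_inner_of_mem_homogeneousPolynomials_one hf
    have hderiv : fderiv ℝ (fun x ↦ ⟪v, x⟫) = fun _ ↦ innerSL ℝ v :=
      funext fun x ↦ (innerSL ℝ v).fderiv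
    ext x
    simp [laplacian_eq_sum_fderiv_fderiv (stdOrthonormalBasis ℝ E)
      (contDiff_of_mem_homogeneousPolynomials hf).contDiffAt, hderiv]

end Polynomials

section SphericalHarmonics

variable {d : ℕ}

local notation "𝔼[" d "]" => EuclideanSpace ℝ (Fin d)
local notation "𝕊[" d "]" => Metric.sphere (0 : EuclideanSpace ℝ (Fin d)) 1

variable {F : 𝕊[d] → ℝ} {f : 𝔼[d] → ℝ} {n : ℕ}

/-- The eigenvalue `-k(k + d - 2)` of the spherical Laplacian on spherical harmonics of
degree `k`. -/
def sphEigenvalue (d k : ℕ) : ℝ :=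
  -(k * (k + d - 2))

theorem sphEigenvalue_strictAnti (hd : 2 ≤ d) : StrictAnti (sphEigenvalue d) := by
  intro j k hjk
  have hd' : (2 : ℝ) ≤ d := by exact_mod_cast hd
  have hjk' : (j : ℝ) < k := by exact_mod_cast hjk
  have hj : (0 : ℝ) ≤ j := j.cast_nonneg
  rw [sphEigenvalue, sphEigenvalue, neg_lt_neg_iff]
  nlinarith [hj]

theorem sphSmooth_restrict_of_mem_homogeneousPolynomials (hf : f ∈ homogeneousPolynomials 𝔼[d] n) :
    SphSmooth fun θ : 𝕊[d] ↦ f θ :=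
  (posHomogeneous_of_mem_homogeneousPolynomials hf).sphSmooth_restrict
    (contDiff_of_mem_homogeneousPolynomials hf).contDiffOn

theorem sphLap_restrict_of_mem_homogeneousPolynomials (hf : f ∈ homogeneousPolynomials 𝔼[d] n)
    (θ : 𝕊[d]) :
    sphLap (fun η : 𝕊[d] ↦ f η) θ = Δ f (θ : 𝔼[d]) + sphEigenvalue d n * f θ := by
  rw [(posHomogeneous_of_mem_homogeneousPolynomials hf).sphLap_restrict
    (contDiff_of_mem_homogeneousPolynomials hf).contDiffOn, sphEigenvalue, neg_mul, sub_eq_add_neg]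
  rfl

variable (d) in
/-- The real vector space of smooth functions on the sphere. -/
def sphSmoothFunctions : Submodule ℝ (𝕊[d] → ℝ) where
  carrier := {F | SphSmooth F}
  add_mem' := SphSmooth.add
  zero_mem' := sphSmooth_const 0
  smul_mem' c _ := SphSmooth.smul c

variable (d) in
/-- The spherical Laplacian as an endomorphism of the space of smooth functions. -/
def sphLapEnd : Module.End ℝ (sphSmoothFunctions d) where
  toFun F := ⟨sphLap F, F.2.sphLap⟩
  map_add' F G := Subtype.ext (sphLap_add F.2 G.2)
  map_smul' c F := Subtype.ext (sphLap_smul c F.2)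

variable (d) in
/-- The restrictions to the sphere of the homogeneous polynomials of degree `n`. -/
def polynomialsOnSphere (n : ℕ) : Submodule ℝ (sphSmoothFunctions d) :=
  ((homogeneousPolynomials 𝔼[d] n).map (LinearMap.funLeft ℝ ℝ Subtype.val)).comap
    (sphSmoothFunctions d).subtype

theorem restrict_mem_polynomialsOnSphere (hf : f ∈ homogeneousPolynomials 𝔼[d] n) :
    ⟨fun θ ↦ f θ, sphSmooth_restrict_of_mem_homogeneousPolynomials hf⟩ ∈ polynomialsOnSphere d n :=
  ⟨f, hf, rfl⟩

theorem sphLapEnd_sub_mem_iSup {F : sphSmoothFunctions d} (hF : F ∈ polynomialsOnSphere d n) :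
    sphLapEnd d F - sphEigenvalue d n • F ∈ ⨆ k < n, polynomialsOnSphere d k := by
  obtain ⟨F, hFs⟩ := F
  obtain ⟨f, hf, rfl⟩ := hF
  have sub_eq : ((sphLapEnd d ⟨_, hFs⟩ - sphEigenvalue d n • ⟨_, hFs⟩ : sphSmoothFunctions d) :
      𝕊[d] → ℝ) = fun θ : 𝕊[d] ↦ Δ f (θ : 𝔼[d]) :=
    funext fun θ ↦ sub_eq_of_eq_add (sphLap_restrict_of_mem_homogeneousPolynomials hf θ)
  obtain hn | ⟨m, rfl⟩ : n < 2 ∨ ∃ m, n = m + 2 := by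
    obtain hn | hn := lt_or_ge n 2
    exacts [.inl hn, .inr ⟨n - 2, by omega⟩]
  · rw [laplacian_eq_zero_of_mem_homogeneousPolynomials hf hn] at sub_eq
    exact (Subtype.ext sub_eq : _ = (0 : sphSmoothFunctions d)) ▸ Submodule.zero_mem _
  · have hm : m < m + 2 := by omega
    refine Submodule.mem_iSup_of_mem m (Submodule.mem_iSup_of_mem hm ?_)
    exact ⟨Δ f, laplacian_mem_homogeneousPolynomials hf, sub_eq.symm⟩

theorem polynomialsOnSphere_le_iSup_eigenspace (hd : 2 ≤ d) (n : ℕ) :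
    polynomialsOnSphere d n ≤ ⨆ k, (sphLapEnd d).eigenspace (sphEigenvalue d k) :=
  (le_iSup_eigenspace_of_sub_smul_mem (sphEigenvalue_strictAnti hd).injective
    (fun _ _ ↦ sphLapEnd_sub_mem_iSup) n).trans (iSup_mono fun _ ↦ iSup_le fun _ ↦ le_rfl)

variable (d) in
/-- Smooth functions on the sphere as continuous ones. -/
def sphToContinuousMap : sphSmoothFunctions d →ₗ[ℝ] C(𝕊[d], ℝ) where
  toFun F := ⟨F, F.2.continuous⟩
  map_add' _ _ := rfl
  map_smul' _ _ := rfl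

variable (d) in
/-- Smooth functions on the sphere as square-integrable ones. -/
def sphToLp : sphSmoothFunctions d →ₗ[ℝ] Lp ℝ 2 (sphMeasure d) :=
  (ContinuousMap.toLp 2 (sphMeasure d) ℝ).toLinearMap ∘ₗ sphToContinuousMap d

theorem inner_sphToLp (F G : sphSmoothFunctions d) :
    ⟪sphToLp d F, sphToLp d G⟫ = ∫ θ, (F : 𝕊[d] → ℝ) θ * (G : 𝕊[d] → ℝ) θ ∂(sphMeasure d) := by
  simp only [sphToLp, LinearMap.comp_apply, ContinuousLinearMap.coe_coe]
  rw [ContinuousMap.inner_toLp]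
  simp [sphToContinuousMap, mul_comm]

theorem inner_sphToLp_sphLapEnd (F G : sphSmoothFunctions d) :
    ⟪sphToLp d F, sphToLp d (sphLapEnd d G)⟫ = ⟪sphToLp d (sphLapEnd d F), sphToLp d G⟫ := by
  rw [inner_sphToLp, inner_sphToLp]
  exact integral_mul_sphLap F.2 G.2

variable (d) in
theorem dense_polynomialsOnSphere :
    Dense ((⨆ n, (polynomialsOnSphere d n).map (sphToContinuousMap d) :
      Submodule ℝ C(𝕊[d], ℝ)) : Set C(𝕊[d], ℝ)) := by
  let restrictInner (v : 𝔼[d]) : C(𝕊[d], ℝ) := ⟨fun θ ↦ ⟪v, θ⟫, by fun_prop⟩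
  have separates : (Algebra.adjoin ℝ (Set.range restrictInner)).SeparatesPoints := by
    intro θ η hne
    have hsub : (θ - η : 𝔼[d]) ≠ 0 := sub_ne_zero.mpr (Subtype.coe_injective.ne hne)
    refine ⟨_, ⟨_, Algebra.subset_adjoin ⟨θ - η, rfl⟩, rfl⟩, fun h ↦ hsub ?_⟩
    rwa [← inner_self_eq_zero (𝕜 := ℝ), inner_sub_right, sub_eq_zero]
  have monomial {p : C(𝕊[d], ℝ)} (hp : p ∈ Submonoid.closure (Set.range restrictInner)) :
      ∃ n, ∃ f ∈ homogeneousPolynomials 𝔼[d] n, ∀ θ : 𝕊[d], f θ = p θ := by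
    induction hp using Submonoid.closure_induction with
    | mem p hp =>
      obtain ⟨v, rfl⟩ := hp
      exact ⟨1, _, inner_mem_homogeneousPolynomials v, fun _ ↦ rfl⟩
    | one => exact ⟨0, 1, by simp [homogeneousPolynomials], fun _ ↦ rfl⟩
    | mul p q _ _ hp hq =>
      obtain ⟨m, f, hf, hfp⟩ := hp
      obtain ⟨n, g, hg, hgq⟩ := hq
      exact ⟨m + n, f * g, mul_mem_homogeneousPolynomials hf hg, fun θ ↦ by simp [hfp, hgq]⟩
  have adjoin_le : Subalgebra.toSubmodule (Algebra.adjoin ℝ (Set.range restrictInner)) ≤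
      ⨆ n, (polynomialsOnSphere d n).map (sphToContinuousMap d) := by
    rw [Algebra.adjoin_eq_span, Submodule.span_le]
    intro p hp
    obtain ⟨n, f, hf, hfp⟩ := monomial hp
    exact Submodule.mem_iSup_of_mem n
      ⟨_, restrict_mem_polynomialsOnSphere hf, ContinuousMap.ext hfp⟩
  refine Dense.mono adjoin_le (dense_iff_closure_eq.mpr ?_)
  exact congrArg SetLike.coe
    (ContinuousMap.subalgebra_topologicalClosure_eq_top_of_separatesPoints _ separates)

theorem iSup_map_eigenspace_dense (hd : 2 ≤ d) :
    (⨆ k, ((sphLapEnd d).eigenspace (sphEigenvalue d k)).map (sphToLp d)).topologicalClosure =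
      ⊤ := by
  rw [← Submodule.dense_iff_topologicalClosure_eq_top]
  have continuous_dense :=
    ContinuousMap.toLp_denseRange (p := 2) ℝ (sphMeasure d) ℝ ENNReal.ofNat_ne_top
  refine (continuous_dense.dense_image
    (ContinuousMap.toLp 2 (sphMeasure d) ℝ).continuous (dense_polynomialsOnSphere d)).mono ?_
  rintro _ ⟨p, hp, rfl⟩
  rw [← Submodule.map_iSup] at hp ⊢
  obtain ⟨F, hF, rfl⟩ := hp
  exact ⟨F, iSup_le (polynomialsOnSphere_le_iSup_eigenspace hd) hF, rfl⟩

theorem isOrtho_map_eigenspace {a b : ℝ} (hab : a ≠ b) :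
    ((sphLapEnd d).eigenspace a).map (sphToLp d) ⟂
      ((sphLapEnd d).eigenspace b).map (sphToLp d) := by
  rw [Submodule.isOrtho_iff_inner_eq]
  rintro _ ⟨F, hF, rfl⟩ _ ⟨G, hG, rfl⟩
  have hsym := inner_sphToLp_sphLapEnd F G
  rw [Module.End.mem_eigenspace_iff.mp hF, Module.End.mem_eigenspace_iff.mp hG, map_smul, map_smul,
    inner_smul_left, inner_smul_right] at hsym
  exact (mul_eq_mul_right_iff.mp hsym).resolve_left hab.symm

theorem sphLapEnd_sub_mem_orthogonal_eigenspace (F : sphSmoothFunctions d) (a b : ℝ) :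
    sphToLp d (sphLapEnd d F - b • F) - (a - b) • sphToLp d F ∈
      (((sphLapEnd d).eigenspace a).map (sphToLp d))ᗮ := by
  rw [Submodule.mem_orthogonal]
  rintro _ ⟨G, hG, rfl⟩
  have hsym := inner_sphToLp_sphLapEnd G F
  rw [Module.End.mem_eigenspace_iff.mp hG, map_smul, inner_smul_left] at hsym
  simp only [map_sub, map_smul, inner_sub_right, inner_smul_right, hsym, conj_trivial]
  ring

/-- No eigenvalue of the spherical Laplacian lies strictly between two consecutive ones. -/
theorem integral_sphLap_sub_mul_sphLap_sub_nonneg (hd : 2 ≤ d) (hF : SphSmooth F) (m : ℕ) :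
    0 ≤ ∫ θ, (sphLap F θ - sphEigenvalue d m * F θ) *
      (sphLap F θ - sphEigenvalue d (m + 1) * F θ) ∂(sphMeasure d) := by
  have hanti := sphEigenvalue_strictAnti hd
  have gap (k : ℕ) : 0 ≤ (sphEigenvalue d k - sphEigenvalue d m) *
      (sphEigenvalue d k - sphEigenvalue d (m + 1)) := by
    obtain hk | hk := Nat.lt_or_ge m k
    · exact mul_nonneg_of_nonpos_of_nonpos (sub_nonpos.mpr (hanti.antitone hk.le))
        (sub_nonpos.mpr (hanti.antitone hk))
    · exact mul_nonneg (sub_nonneg.mpr (hanti.antitone hk))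
        (sub_nonneg.mpr (hanti.antitone (hk.trans m.le_succ)))
  have hinner := inner_nonneg_of_iSup_dense
    (fun j k hjk ↦ isOrtho_map_eigenspace (hanti.injective.ne hjk)) (iSup_map_eigenspace_dense hd)
    gap (fun k ↦ sphLapEnd_sub_mem_orthogonal_eigenspace ⟨F, hF⟩ _ _)
    (fun k ↦ sphLapEnd_sub_mem_orthogonal_eigenspace ⟨F, hF⟩ _ _)
  rwa [inner_sphToLp] at hinner

end SphericalHarmonics

section MeanRadius

variable {d : ℕ}

local notation "𝔼[" d "]" => EuclideanSpace ℝ (Fin d)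
local notation "𝕊[" d "]" => Metric.sphere (0 : EuclideanSpace ℝ (Fin d)) 1

variable {F G g u : 𝕊[d] → ℝ}

theorem sphArea_pos (hd : 2 ≤ d) : 0 < sphArea d := by
  have : NeZero d := ⟨by omega⟩
  exact ENNReal.toReal_pos (Measure.measure_univ_ne_zero.mpr (Measure.toSphere_ne_zero _))
    (measure_ne_top _ _)

theorem integral_const_add_sq (hu : Continuous u) (hmean : ∫ θ, u θ ∂(sphMeasure d) = 0) (s : ℝ) :
    ∫ θ, (s + u θ) ^ 2 ∂(sphMeasure d) =
      sphArea d * s ^ 2 + ∫ θ, u θ ^ 2 ∂(sphMeasure d) := by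
  have hint := integrable_sphMeasure_of_continuous hu
  calc ∫ θ, (s + u θ) ^ 2 ∂(sphMeasure d)
      = ∫ θ, (s ^ 2 + 2 * s * u θ + u θ ^ 2) ∂(sphMeasure d) := by simp only [add_sq]
    _ = sphArea d * s ^ 2 + 2 * s * ∫ θ, u θ ∂(sphMeasure d) + ∫ θ, u θ ^ 2 ∂(sphMeasure d) := by
      rw [integral_add ((integrable_const _).fun_add (hint.const_mul _))
        (integrable_sphMeasure_of_continuous (hu.fun_pow 2)),
        integral_add (integrable_const _) (hint.const_mul _), integral_const_mul, integral_const]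
      rfl
    _ = sphArea d * s ^ 2 + ∫ θ, u θ ^ 2 ∂(sphMeasure d) := by rw [hmean, mul_zero, add_zero]

/-- The mean radius of curvature `H_{d-2} / H_{d-1}`, at the boundary point with outer normal `θ`,
of the convex body with support function `F`. -/
def meanRadius (F : 𝕊[d] → ℝ) (θ : 𝕊[d]) : ℝ :=
  F θ + sphLap F θ / (d - 1)

theorem continuous_meanRadius (hF : SphSmooth F) : Continuous (meanRadius F) :=
  hF.continuous.add (hF.sphLap.continuous.div_const _)

theorem meanRadius_add (hF : SphSmooth F) (hG : SphSmooth G) :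
    meanRadius (F + G) = meanRadius F + meanRadius G := by
  ext θ
  simp only [meanRadius, sphLap_add hF hG, Pi.add_apply]
  ring

theorem integral_meanRadius (hF : SphSmooth F) :
    ∫ θ, meanRadius F θ ∂(sphMeasure d) = ∫ θ, F θ ∂(sphMeasure d) := by
  simp only [meanRadius]
  rw [integral_add (integrable_sphMeasure_of_continuous hF.continuous)
    (integrable_sphMeasure_of_continuous (hF.sphLap.continuous.div_const _)),
    integral_div, integral_sphLap hF, zero_div, add_zero]

theorem integral_mul_meanRadius (hF : SphSmooth F) (hG : SphSmooth G) :
    ∫ θ, F θ * meanRadius G θ ∂(sphMeasure d) = ∫ θ, meanRadius F θ * G θ ∂(sphMeasure d) := by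
  have hFG : Integrable (fun θ ↦ F θ * G θ) (sphMeasure d) :=
    integrable_sphMeasure_of_continuous (hF.continuous.mul hG.continuous)
  have hFΔG : Integrable (fun θ ↦ F θ * sphLap G θ / ((d : ℝ) - 1)) (sphMeasure d) :=
    integrable_sphMeasure_of_continuous ((hF.continuous.mul hG.sphLap.continuous).div_const _)
  have hΔFG : Integrable (fun θ ↦ sphLap F θ * G θ / ((d : ℝ) - 1)) (sphMeasure d) :=
    integrable_sphMeasure_of_continuous ((hF.sphLap.continuous.mul hG.continuous).div_const _)
  simp only [meanRadius, mul_add, add_mul, ← mul_div_assoc, div_mul_eq_mul_div]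
  rw [integral_add hFG hFΔG, integral_add hFG hΔFG, integral_div, integral_div,
    integral_mul_sphLap hF hG]

/-- The spherical Laplacian has no eigenvalue strictly between `-2d` and `-3(d + 1)`, expressed
through the mean radius. -/
theorem integral_meanRadius_sq_add_nonneg (hd : 2 ≤ d) (hF : SphSmooth F) :
    0 ≤ (d - 1 : ℝ) ^ 2 * ∫ θ, meanRadius F θ ^ 2 ∂(sphMeasure d) +
      (d - 1) * (3 * d + 5) * ∫ θ, F θ * meanRadius F θ ∂(sphMeasure d) +
      2 * (d + 1) * (d + 2) * ∫ θ, F θ ^ 2 ∂(sphMeasure d) := by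
  have hd' : (d : ℝ) - 1 ≠ 0 := sub_ne_zero.mpr (by exact_mod_cast (by omega : d ≠ 1))
  have hM := continuous_meanRadius hF
  have hMM := integrable_sphMeasure_of_continuous (hM.fun_pow 2)
  have hFM := integrable_sphMeasure_of_continuous (hF.continuous.fun_mul hM)
  have hFF := integrable_sphMeasure_of_continuous (hF.continuous.fun_pow 2)
  refine (integral_sphLap_sub_mul_sphLap_sub_nonneg hd hF 2).trans_eq ?_
  rw [← integral_const_mul, ← integral_const_mul, ← integral_const_mul,
    ← integral_add (hMM.const_mul _) (hFM.const_mul _),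
    ← integral_add ((hMM.const_mul _).fun_add (hFM.const_mul _)) (hFF.const_mul _)]
  congr 1 with θ
  simp only [meanRadius, sphEigenvalue]
  field_simp
  push_cast
  ring

/-- The support function, on the sphere, of the ball with radius `r` and centre `z`. -/
def ballSupport (r : ℝ) (z : 𝔼[d]) (θ : 𝕊[d]) : ℝ :=
  r + ⟪z, θ⟫

theorem sphSmooth_ballSupport (r : ℝ) (z : 𝔼[d]) : SphSmooth (ballSupport r z) :=
  (sphSmooth_const r).add <|
    sphSmooth_restrict_of_mem_homogeneousPolynomials (inner_mem_homogeneousPolynomials z)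

theorem meanRadius_ballSupport (hd : 2 ≤ d) (r : ℝ) (z : 𝔼[d]) :
    meanRadius (ballSupport r z) = fun _ ↦ r := by
  have hd' : (d : ℝ) - 1 ≠ 0 := sub_ne_zero.mpr (by exact_mod_cast (by omega : d ≠ 1))
  have hz := inner_mem_homogeneousPolynomials z
  have lap_eq : sphLap (ballSupport r z) =
      sphLap (fun _ : 𝕊[d] ↦ r) + sphLap (fun θ : 𝕊[d] ↦ ⟪z, (θ : 𝔼[d])⟫) :=
    sphLap_add (sphSmooth_const r) (sphSmooth_restrict_of_mem_homogeneousPolynomials hz)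
  ext θ
  rw [meanRadius, lap_eq, Pi.add_apply, sphLap_const,
    sphLap_restrict_of_mem_homogeneousPolynomials hz,
    laplacian_eq_zero_of_mem_homogeneousPolynomials hz one_lt_two]
  simp only [ballSupport, sphEigenvalue, Pi.zero_apply]
  field_simp
  push_cast
  ring

theorem integral_ballSupport (hd : 2 ≤ d) (r : ℝ) (z : 𝔼[d]) :
    ∫ θ, ballSupport r z θ ∂(sphMeasure d) = sphArea d * r := by
  rw [← integral_meanRadius (sphSmooth_ballSupport r z), meanRadius_ballSupport hd, integral_const]
  rfl

theorem integral_meanRadius_ballSupport_add_sq (hd : 2 ≤ d) (hg : SphSmooth g)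
    (hmean : ∫ θ, g θ ∂(sphMeasure d) = 0) (r : ℝ) (z : 𝔼[d]) :
    ∫ θ, meanRadius (ballSupport r z + g) θ ^ 2 ∂(sphMeasure d) =
      sphArea d * r ^ 2 + ∫ θ, meanRadius g θ ^ 2 ∂(sphMeasure d) := by
  rw [meanRadius_add (sphSmooth_ballSupport r z) hg, meanRadius_ballSupport hd]
  exact integral_const_add_sq (continuous_meanRadius hg) ((integral_meanRadius hg).trans hmean) r

theorem integral_ballSupport_add_mul_meanRadius (hd : 2 ≤ d) (hg : SphSmooth g)
    (hmean : ∫ θ, g θ ∂(sphMeasure d) = 0) (r : ℝ) (z : 𝔼[d]) :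
    ∫ θ, (ballSupport r z + g) θ * meanRadius (ballSupport r z + g) θ ∂(sphMeasure d) =
      sphArea d * r ^ 2 + ∫ θ, g θ * meanRadius g θ ∂(sphMeasure d) := by
  have hB := sphSmooth_ballSupport r z
  have hM := continuous_meanRadius hg
  have cross : ∫ θ, ballSupport r z θ * meanRadius g θ ∂(sphMeasure d) = 0 := by
    rw [integral_mul_meanRadius hB hg, meanRadius_ballSupport hd, integral_const_mul, hmean,
      mul_zero]
  have hint₁ := integrable_sphMeasure_of_continuous (hB.add hg).continuous
  have hint₂ := integrable_sphMeasure_of_continuous (hB.continuous.fun_mul hM)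
  have hint₃ := integrable_sphMeasure_of_continuous (hg.continuous.fun_mul hM)
  rw [meanRadius_add hB hg, meanRadius_ballSupport hd]
  calc ∫ θ, (ballSupport r z + g) θ * (r + meanRadius g θ) ∂(sphMeasure d)
      = ∫ θ, ((ballSupport r z + g) θ * r +
          (ballSupport r z θ * meanRadius g θ + g θ * meanRadius g θ)) ∂(sphMeasure d) := by
        simp only [mul_add, Pi.add_apply, add_mul]
    _ = (∫ θ, (ballSupport r z + g) θ ∂(sphMeasure d)) * r +
          (∫ θ, ballSupport r z θ * meanRadius g θ ∂(sphMeasure d) +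
            ∫ θ, g θ * meanRadius g θ ∂(sphMeasure d)) := by
        rw [integral_add (hint₁.mul_const r) (hint₂.fun_add hint₃), integral_mul_const,
          integral_add hint₂ hint₃]
    _ = sphArea d * r ^ 2 + ∫ θ, g θ * meanRadius g θ ∂(sphMeasure d) := by
        rw [cross, integral_add' (integrable_sphMeasure_of_continuous hB.continuous)
          (integrable_sphMeasure_of_continuous hg.continuous), integral_ballSupport hd, hmean]
        ring

theorem minkowski_deficit_lower_bound_general (hd : 2 ≤ d) (hF : SphSmooth F) (r : ℝ) (z : 𝔼[d]) :
    (((d : ℝ) - 1) / (d + 1)) * (∫ θ, meanRadius F θ ^ 2 ∂(sphMeasure d) -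
        (1 / sphArea d) * (∫ θ, F θ ∂(sphMeasure d)) ^ 2) -
      ((1 / sphArea d) * (∫ θ, F θ ∂(sphMeasure d)) ^ 2 -
        ∫ θ, F θ * meanRadius F θ ∂(sphMeasure d)) ≥
    (2 * ((d : ℝ) + 2) / (d + 1)) * ((1 / sphArea d) * (∫ θ, F θ ∂(sphMeasure d)) ^ 2 -
      ∫ θ, F θ * meanRadius F θ ∂(sphMeasure d) -
        (((d : ℝ) + 1) / (d - 1)) * ∫ θ, (F θ - ballSupport r z θ) ^ 2 ∂(sphMeasure d)) := by
  have hA := sphArea_pos hd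
  have hd₁ : 0 < (d : ℝ) - 1 := sub_pos.mpr (by exact_mod_cast hd)
  have hd₂ : 0 < (d : ℝ) + 1 := by positivity
  obtain ⟨c, hc⟩ : ∃ c, ∫ θ, F θ ∂(sphMeasure d) = sphArea d * c :=
    ⟨_, (mul_div_cancel₀ _ hA.ne').symm⟩
  obtain ⟨g, rfl⟩ : ∃ g, F = ballSupport c z + g := ⟨_, (add_sub_cancel _ _).symm⟩
  have hB := sphSmooth_ballSupport c z
  have hg : SphSmooth g :=
    add_sub_cancel_left (ballSupport c z) g ▸ (sphSmoothFunctions d).sub_mem hF hB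
  have hmean : ∫ θ, g θ ∂(sphMeasure d) = 0 := by
    rwa [integral_add' (integrable_sphMeasure_of_continuous hB.continuous)
      (integrable_sphMeasure_of_continuous hg.continuous), integral_ballSupport hd,
      add_eq_left] at hc
  have distance : ∫ θ, ((ballSupport c z + g) θ - ballSupport r z θ) ^ 2 ∂(sphMeasure d) =
      sphArea d * (c - r) ^ 2 + ∫ θ, g θ ^ 2 ∂(sphMeasure d) := by
    rw [← integral_const_add_sq hg.continuous hmean]
    congr with θ
    simp only [Pi.add_apply, ballSupport]
    ring
  have gap := integral_meanRadius_sq_add_nonneg hd hg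
  rw [integral_meanRadius_ballSupport_add_sq hd hg hmean,
    integral_ballSupport_add_mul_meanRadius hd hg hmean, hc, distance, ge_iff_le, ← sub_nonneg]
  refine (add_nonneg (div_nonneg gap (mul_pos hd₁ hd₂).le)
    (by positivity : 0 ≤ 2 * ((d : ℝ) + 2) / (d - 1) * (sphArea d * (c - r) ^ 2))).trans_eq ?_
  field_simp
  ring

theorem SmoothBody.sphSmooth_suppS {K : ConvexBody 𝔼[d]} (hK : SmoothBody K) :
    SphSmooth (suppS K) := by
  refine PosHomogeneous.sphSmooth_restrict (n := 1) (fun c hc x _ ↦ ?_) hK.2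
  rw [suppFn, suppFn, zpow_one, ← smul_eq_mul, ← Real.sSup_smul_of_nonneg hc.le, ← Set.image_smul,
    Set.image_image]
  simp only [inner_smul_right, smul_eq_mul]

theorem intH3_eq_integral_mul_meanRadius (hd : 2 ≤ d) (K : ConvexBody 𝔼[d]) :
    intH3 K = ∫ θ, suppS K θ * meanRadius (suppS K) θ ∂(sphMeasure d) := by
  have hd' : (d : ℝ) - 1 ≠ 0 := sub_ne_zero.mpr (by exact_mod_cast (by omega : d ≠ 1))
  rw [intH3, ← integral_const_mul]
  congr with θ
  simp only [meanRadius]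
  field_simp

end MeanRadius

/-- reverse inequality to the stability Minkowski inequality. If `K` is
a smooth convex body in `ℝ^d` with boundary `Σ = ∂K` a closed convex hypersurface, then
`((d-1)/(d+1)) [∫_Σ H_{d-2}²/H_{d-1} − (1/|𝕊^{d-1}|)(∫_Σ H_{d-2})²] −
[(1/|𝕊^{d-1}|)(∫_Σ H_{d-2})² − ∫_Σ H_{d-3}] ≥
(2(d+2)/(d+1)) [(1/|𝕊^{d-1}|)(∫_Σ H_{d-2})² − ∫_Σ H_{d-3} − ((d+1)/(d-1)) δ₂(K,B(K))²]`. -/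
theorem minkowski_deficit_lower_bound (d : ℕ) (hd : 2 ≤ d)
    (K : ConvexBody (EuclideanSpace ℝ (Fin d))) (hK : SmoothBody K) :
    (((d : ℝ) - 1) / ((d : ℝ) + 1)) *
        (intH2sq K - (1 / sphArea d) * (intH2 K) ^ 2) -
      ((1 / sphArea d) * (intH2 K) ^ 2 - intH3 K) ≥
    (2 * ((d : ℝ) + 2) / ((d : ℝ) + 1)) *
      ((1 / sphArea d) * (intH2 K) ^ 2 - intH3 K -
        (((d : ℝ) + 1) / ((d : ℝ) - 1)) * delta2SqSteiner K) := by
  rw [intH3_eq_integral_mul_meanRadius hd]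
  exact minkowski_deficit_lower_bound_general hd hK.sphSmooth_suppS (meanWidth K / 2) (steinerPt K)
end
end
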